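/- For every positive integer l and every real t, Σ_{n≥0} f^O_{n,2l} · t^{2n}/(2n)! = (1/2)·[ (1/2)·det_{0≤j,k<l}( I_{j−k}(2t) + I_{j+k}(2t) ) + det_{0≤j,k<l−1}( I_{j−k}(2t) − I_{j+k+2}(2t) ) ], where the second determinant is of size (l−1)×(l−1) (equal to 1 when l = 1). -/

import Mathlib

noncomputable section

/-- `lisLE π l` means the longest increasing subsequence of the permutation `π`
has length at most `l`. -/
def lisLE {N : ℕ} (π : Equiv.Perm (Fin N)) (l : ℕ) : Prop :=
  ∀ (k : ℕ) (f : Fin k → Fin N), StrictMono f → StrictMono (fun i => π (f i)) → k ≤ l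

/-- `f^O_{n,l}`: the number of fixed-point-free involutions of `{1,…,2n}` whose
longest increasing subsequence has length at most `l`. -/
def fpfInvCount (n l : ℕ) : ℕ :=
  Nat.card {π : Equiv.Perm (Fin (2 * n)) //
    π * π = 1 ∧ (∀ x, π x ≠ x) ∧ lisLE π l}

/-- The modified Bessel function of the first kind:
`besselI j t = I_j(2t) = Σ_{m≥0} t^{2m+|j|}/(m!·(m+|j|)!)`. -/
def besselI (j : ℤ) (t : ℝ) : ℝ :=
  ∑' m : ℕ, t ^ (2 * m + j.natAbs) /
    ((Nat.factorial m : ℝ) * (Nat.factorial (m + j.natAbs) : ℝ))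

/-!
In the growth diagram of a fixed-point-free involution of `{1, …, 2n}` (the Robinson–Schensted–Knuth
correspondence) the partitions on the last column form a chain that adds one box at a time. Its last
partition has a first row whose length is that of the longest increasing subsequence, and, since the
involution is symmetric with trace zero, all its columns have even length. Conversely, running the
local rule backwards recovers the involution from such a chain. Reading a partition with rows of
length at most `m = 2l` by its column lengths turns the chain into a walk of `2n` unit steps in the
chamber of monotone points of `ℕᵐ`, from the origin to a point with even coordinates.

By the reflection principle, `n! [Xⁿ] L (a₀)` counts the `n`-step walks from the origin, with end
points weighted by `L₀ (aₓ)`. Here `aₓ = det (zᵢ ^ (xⱼ + j))`, `L` is any functional for which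
multiplication by `∑ zᵢ` becomes `d/dX`, and `L₀` is its constant coefficient. Take as the `zᵢ` the
points `Tᵢ, Tᵢ⁻¹`, possibly together with `1, -1`, and let `L₀` be the product of the functionals
`T ^ d ↦ oddSign d`. Then `L₀ (∏ zᵢ ^ bᵢ)` depends only on the parities of the `bᵢ` and on the order
of those of opposite parity. If two adjacent coordinates of `x` have opposite parity, the exponents
in these columns of `aₓ` agree in parity, and swapping the two columns changes the sign of `L₀ (aₓ)`
but not its value, so the weight is `0`. The walks which remain end at all even or at all odd
points, which have the same weight for the points `Tᵢ, Tᵢ⁻¹`, and opposite weights when `1, -1` are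
added.

On the other hand, `a₀` is a Vandermonde determinant at points in inverse pairs, hence up to a
constant the product of the `Tᵢ⁻¹ - Tᵢ` with the square of the determinant of the `Tᵢʲ + Tᵢ⁻ʲ` or of
the `Tᵢʲ - Tᵢ⁻ʲ` (Chebyshev polynomials in `Tᵢ + Tᵢ⁻¹`). The factors `Tᵢ⁻¹ - Tᵢ` turn `oddSign` into
a multiple of the constant term functional, whose exponential moments are the Bessel functions, and
the Andréief identity turns `L (a₀)` into one of the two Bessel determinants. Their combination in
the theorem cancels the walks that end at odd points.
-/

section

open Finset
open scoped Polynomial LaurentPolynomial TensorProduct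

section Determinants

variable {R : Type*} [CommRing R]

lemma det_vandermonde_eq_prod_ite {m : ℕ} (z : Fin m → R) :
    (Matrix.vandermonde z).det = ∏ i, ∏ j, if i < j then z j - z i else 1 := by
  simp_rw [Matrix.det_vandermonde, ← prod_filter, filter_lt_eq_Ioi]

lemma det_vandermonde_append {m n : ℕ} (u : Fin m → R) (w : Fin n → R) :
    (Matrix.vandermonde (Fin.append u w)).det =
      (Matrix.vandermonde u).det * (Matrix.vandermonde w).det * ∏ i, ∏ j, (w j - u i) := by
  have hlt (i : Fin m) (j : Fin n) : Fin.castAdd n i < Fin.natAdd m j := by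
    simp only [Fin.lt_def, Fin.val_castAdd, Fin.val_natAdd]
    omega
  have hle (i : Fin m) (j : Fin n) : ¬ Fin.natAdd m j < Fin.castAdd n i := (hlt i j).not_gt
  simp only [det_vandermonde_eq_prod_ite, Fin.prod_univ_add, Fin.append_left, Fin.append_right,
    hlt, hle, (Fin.strictMono_castAdd n).lt_iff_lt, Fin.natAdd_lt_natAdd_iff, if_true, if_false,
    prod_mul_distrib, prod_const_one]
  ring

lemma prod_Ioi_neg_one (n : ℕ) : ∏ i : Fin n, ∏ _j ∈ Ioi i, (-1 : R) = (-1) ^ n.choose 2 := by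
  simp_rw [prod_const, prod_pow_eq_pow_sum, Fin.card_Ioi]
  rw [Fin.sum_univ_eq_sum_range (fun i => n - 1 - i), sum_range_reflect (fun i => i),
    sum_range_id, Nat.choose_two_right]

lemma det_vandermonde_append_inv {n : ℕ} {x y : Fin n → R} (h : ∀ i, x i * y i = 1) :
    (Matrix.vandermonde (Fin.append x y)).det =
      (-1) ^ n.choose 2 * ((∏ i, (y i - x i)) * (Matrix.vandermonde (x + y)).det ^ 2) := by
  have pair (i j : Fin n) : (x j - x i) * (y j - y i) * ((y j - x i) * (y i - x j)) =
      -1 * ((x + y) j - (x + y) i) ^ 2 := by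
    have hx : (x j - x i) * (y j - x i) = x i * ((x i + y i) - (x j + y j)) := by
      linear_combination h j - h i
    have hy : (y j - y i) * (y i - x j) = y i * ((x j + y j) - (x i + y i)) := by
      linear_combination h i - h j
    simp only [Pi.add_apply]
    linear_combination (y j - y i) * (y i - x j) * hx +
      x i * ((x i + y i) - (x j + y j)) * hy - ((x i + y i) - (x j + y j)) ^ 2 * h i
  have cross : ∏ i, ∏ j, (y j - x i) =
      (∏ i, (y i - x i)) * ∏ i, ∏ j ∈ Ioi i, (y j - x i) * (y i - x j) := by
    rw [prod_prod_Ioi_mul_eq_prod_prod_off_diag (fun i j => y i - x j), ← prod_mul_distrib]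
    exact prod_congr rfl fun i _ => Fintype.prod_eq_mul_prod_compl i _
  rw [det_vandermonde_append, cross, mul_left_comm, mul_left_comm ((-1) ^ _), ← prod_Ioi_neg_one]
  simp only [Matrix.det_vandermonde, ← prod_pow, ← prod_mul_distrib, pair]

lemma det_vandermonde_append_inv_one_neg_one {n : ℕ} {x y : Fin n → R}
    (h : ∀ i, x i * y i = 1) :
    (Matrix.vandermonde (Fin.append (Fin.append x y) ![1, -1])).det =
      2 * (-1) ^ (n.choose 2 + n + 1) * ((∏ i, (y i - x i)) *
        ((∏ i, (x i - y i)) * (Matrix.vandermonde (x + y)).det) ^ 2) := by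
  have cross : ∏ i, ∏ j : Fin 2, (![1, -1] j - Fin.append x y i) =
      (-1) ^ n * (∏ i, (x i - y i)) ^ 2 := by
    have pair (i : Fin n) : (1 - x i) * (-1 - x i) * ((1 - y i) * (-1 - y i)) =
        -1 * (x i - y i) ^ 2 := by
      linear_combination (x i * y i - 1) * h i
    simp only [Fin.prod_univ_add, Fin.prod_univ_two, Fin.append_left, Fin.append_right,
      Matrix.cons_val_zero, Matrix.cons_val_one, ← prod_mul_distrib, pair]
    rw [prod_mul_distrib, prod_pow, prod_const, card_univ, Fintype.card_fin]
  have two : (Matrix.vandermonde ![(1 : R), -1]).det = -2 := by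
    simp only [Matrix.det_fin_two, Matrix.vandermonde_apply, Matrix.cons_val_zero,
      Matrix.cons_val_one, Fin.val_zero, Fin.val_one, pow_zero, pow_one]
    ring
  rw [det_vandermonde_append, det_vandermonde_append_inv h, cross, two]
  ring

end Determinants

section Chebyshev

open Polynomial (X IsMonicOfDegree)
open Polynomial.Chebyshev (C S)

variable {R : Type*} [CommRing R]

lemma isMonicOfDegree_of_recurrence [Nontrivial R] {P : ℕ → R[X]} {d : ℕ}
    (h₀ : (P 0).IsMonicOfDegree d) (h₁ : (P 1).IsMonicOfDegree (d + 1))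
    (h : ∀ n, P (n + 2) = X * P (n + 1) - P n) (n : ℕ) : (P n).IsMonicOfDegree (n + d) := by
  induction n using Nat.twoStepInduction with
  | zero => simpa using h₀
  | one => simpa [add_comm] using h₁
  | more n ih₀ ih₁ =>
    have hX := (Polynomial.isMonicOfDegree_X R).mul ih₁
    rw [show 1 + (n + 1 + d) = n + 2 + d by ring] at hX
    rw [h]
    exact hX.sub (by rw [ih₀.natDegree_eq]; omega)

lemma isMonicOfDegree_chebyshev_S [Nontrivial R] (n : ℕ) : (S R n).IsMonicOfDegree n := by
  refine isMonicOfDegree_of_recurrence (P := fun n => S R n) (d := 0) (by simp)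
    (by simpa using Polynomial.isMonicOfDegree_X R) (fun n => ?_) n
  push_cast
  exact Polynomial.Chebyshev.S_add_two R n

lemma isMonicOfDegree_chebyshev_C [Nontrivial R] (n : ℕ) :
    (C R (n + 1)).IsMonicOfDegree (n + 1) := by
  have hC₂ : (C R 2).IsMonicOfDegree 2 := by
    rw [Polynomial.Chebyshev.C_two]
    exact (Polynomial.isMonicOfDegree_X_pow R 2).sub (by simp [Polynomial.natDegree_ofNat])
  refine isMonicOfDegree_of_recurrence (P := fun n => C R (n + 1)) (d := 1)
    (by simpa using Polynomial.isMonicOfDegree_X R) (by simpa [one_add_one_eq_two] using hC₂)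
    (fun n => ?_) n
  push_cast
  rw [add_right_comm, Polynomial.Chebyshev.C_add_two]

lemma eval_add_chebyshev_C {x y : R} (h : x * y = 1) (n : ℕ) :
    (C R n).eval (x + y) = x ^ n + y ^ n := by
  induction n using Nat.twoStepInduction with
  | zero => simp [one_add_one_eq_two]
  | one => simp
  | more n ih₀ ih₁ =>
    push_cast at ih₁ ⊢
    rw [Polynomial.Chebyshev.C_add_two, Polynomial.eval_sub, Polynomial.eval_mul,
      Polynomial.eval_X, ih₀, ih₁]
    linear_combination (x ^ n + y ^ n) * h

lemma sub_mul_eval_add_chebyshev_S {x y : R} (h : x * y = 1) (n : ℕ) :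
    (x - y) * (S R n).eval (x + y) = x ^ (n + 1) - y ^ (n + 1) := by
  induction n using Nat.twoStepInduction with
  | zero => simp
  | one => simp; ring
  | more n ih₀ ih₁ =>
    push_cast at ih₁ ⊢
    rw [Polynomial.Chebyshev.S_add_two, Polynomial.eval_sub, Polynomial.eval_mul,
      Polynomial.eval_X, mul_sub, ih₀, mul_left_comm, ih₁]
    linear_combination (x ^ (n + 1) - y ^ (n + 1)) * h

lemma det_pow_add_pow {n : ℕ} {x y : Fin (n + 1) → R} (h : ∀ i, x i * y i = 1) :
    (Matrix.of fun i j : Fin (n + 1) => x i ^ (j : ℕ) + y i ^ (j : ℕ)).det =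
      2 * (Matrix.vandermonde (x + y)).det := by
  nontriviality R
  let P : Fin (n + 1) → R[X] := Fin.cons 1 fun j => C R ((j : ℕ) + 1)
  have hP : ∀ j : Fin (n + 1), (P j).IsMonicOfDegree j :=
    Fin.cases (by simp [P]) fun j => by simpa [P] using isMonicOfDegree_chebyshev_C (j : ℕ)
  have hc : ∏ j : Fin (n + 1), (Fin.cons 2 1 : Fin (n + 1) → R) j = 2 := by
    simp [Fin.prod_univ_succ]
  rw [Matrix.det_eval_matrixOfPolynomials_eq_det_vandermonde _ P (fun j => (hP j).natDegree_eq)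
    (fun j => (hP j).monic), ← hc, ← Matrix.det_mul_row]
  congr 1
  ext i j
  cases j using Fin.cases with
  | zero => simp [P, one_add_one_eq_two]
  | succ j => simpa [P] using (eval_add_chebyshev_C (h i) (j + 1)).symm

lemma det_pow_sub_pow {n : ℕ} {x y : Fin n → R} (h : ∀ i, x i * y i = 1) :
    (Matrix.of fun i j : Fin n => x i ^ ((j : ℕ) + 1) - y i ^ ((j : ℕ) + 1)).det =
      (∏ i, (x i - y i)) * (Matrix.vandermonde (x + y)).det := by
  nontriviality R
  rw [Matrix.det_eval_matrixOfPolynomials_eq_det_vandermonde _ (fun j : Fin n => S R (j : ℕ))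
    (fun j => (isMonicOfDegree_chebyshev_S (j : ℕ)).natDegree_eq)
    (fun j => (isMonicOfDegree_chebyshev_S (j : ℕ)).monic), ← Matrix.det_mul_column]
  congr 1
  ext i j
  exact (sub_mul_eval_add_chebyshev_S (h i) j).symm

end Chebyshev

section ProductFunctional

open PiTensorProduct

variable {R A B ι : Type*} [CommRing R] [CommRing A] [Algebra R A] [CommRing B] [Algebra R B]

lemma derivation_prod [DecidableEq ι] (D : Derivation R A A) (s : Finset ι) (f : ι → A) :
    D (∏ i ∈ s, f i) = ∑ i ∈ s, (∏ j ∈ s.erase i, f j) * D (f i) := by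
  induction s using Finset.induction_on with
  | empty => simp
  | insert a s ha ih =>
    have herase (i : ι) (hi : i ∈ s) :
        ∏ j ∈ (insert a s).erase i, f j = f a * ∏ j ∈ s.erase i, f j := by
      rw [erase_insert_of_ne fun h : a = i => ha (h ▸ hi), prod_insert (by simp [ha])]
    rw [prod_insert ha, Derivation.leibniz, ih, sum_insert ha, erase_insert ha, smul_eq_mul,
      smul_eq_mul, mul_sum, add_comm]
    congr 1
    exact sum_congr rfl fun i hi => by rw [herase i hi, mul_assoc]

/-- The copy of `f` in the `i`-th variable. When `B` is the ring of Laurent polynomials in one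
variable, its tensor power over `ι` serves as the ring of Laurent polynomials in the variables
`ι`. -/
abbrev inVariable (R : Type*) [CommRing R] [Algebra R B] [DecidableEq ι] (i : ι) :
    B →ₐ[R] ⨂[R] _ : ι, B :=
  singleAlgHom (A := fun _ => B) i

variable [Fintype ι]

/-- The linear map on the tensor power of `B` given by `⨂ i, f i ↦ ∏ i, M (f i)`. -/
def productFunctional (ι : Type*) [Fintype ι] (M : B →ₗ[R] A) : (⨂[R] _ : ι, B) →ₗ[R] A :=
  lift ((MultilinearMap.mkPiAlgebra R ι A).compLinearMap fun _ => M)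

lemma productFunctional_tprod (M : B →ₗ[R] A) (f : ι → B) :
    productFunctional ι M (tprod R f) = ∏ i, M (f i) := by
  simp [productFunctional]

lemma productFunctional_algebraMap_mul (M : B →ₗ[R] A) (r : R) (F : ⨂[R] _ : ι, B) :
    productFunctional ι M (algebraMap R _ r * F) = r • productFunctional ι M F := by
  rw [← Algebra.smul_def]
  exact map_smul _ r F

variable [DecidableEq ι]

lemma prod_inVariable (f : ι → B) : ∏ i, inVariable R i (f i) = tprod R f := by
  simp only [inVariable, singleAlgHom_apply]
  rw [← tprod_prod]
  simp [Finset.univ_prod_mulSingle]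

lemma det_inVariable (p : ι → B) :
    (Matrix.of fun i j => inVariable R i (p j)).det =
      ∑ σ : Equiv.Perm ι, Equiv.Perm.sign σ • tprod R (p ∘ σ) := by
  simp only [← Matrix.det_transpose (Matrix.of _), Matrix.det_apply, ← prod_inVariable]
  rfl

lemma productFunctional_det_mul_det (M : B →ₗ[R] A) (p q : ι → B) :
    productFunctional ι M ((Matrix.of fun i j => inVariable R i (p j)).det *
        (Matrix.of fun i j => inVariable R i (q j)).det) =
      (Fintype.card ι).factorial • (Matrix.of fun i j => M (p i * q j)).det := by
  have inner (σ : Equiv.Perm ι) :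
      ∑ τ : Equiv.Perm ι, Equiv.Perm.sign σ • Equiv.Perm.sign τ • ∏ i, M (p (σ i) * q (τ i)) =
        (Matrix.of fun i j => M (p i * q j)).det := by
    rw [← smul_sum]
    have h := Matrix.det_permute σ (Matrix.of fun i j => M (p i * q j))
    rw [← Matrix.det_transpose, Matrix.det_apply] at h
    simp only [Matrix.transpose_apply, Matrix.submatrix_apply, Matrix.of_apply, id] at h
    rw [h, Units.smul_def, zsmul_eq_mul, ← mul_assoc, ← Int.cast_mul, Int.units_coe_mul_self,
      Int.cast_one, one_mul]
  simp_rw [det_inVariable, sum_mul_sum, smul_mul_smul_comm, tprod_mul_tprod, map_sum, mul_smul,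
    Units.smul_def, map_zsmul, productFunctional_tprod, ← Units.smul_def]
  simp [inner, Fintype.card_perm]

lemma derivation_productFunctional (D : Derivation R A A) {M : B →ₗ[R] A} {h : B}
    (hM : ∀ f, D (M f) = M (h * f)) (F : ⨂[R] _ : ι, B) :
    D (productFunctional ι M F) = productFunctional ι M ((∑ i, inVariable R i h) * F) := by
  induction F using PiTensorProduct.induction_on with
  | add F G hF hG => rw [map_add, map_add, mul_add, map_add, hF, hG]
  | smul_tprod r f =>
    rw [map_smul, D.map_smul, mul_smul_comm, map_smul, productFunctional_tprod, derivation_prod,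
      sum_mul, map_sum]
    congr 1
    refine sum_congr rfl fun i _ => ?_
    rw [singleAlgHom_apply, tprod_mul_tprod, productFunctional_tprod,
      ← prod_erase_mul _ _ (mem_univ i), hM]
    congr 1
    · exact prod_congr rfl fun j hj => by simp [ne_of_mem_erase hj]
    · simp

end ProductFunctional

section MomentSeries

open PowerSeries

variable {K B : Type*} [Field K] [CommRing B] [Algebra K B]

/-- The exponential generating function `∑ n, φ (h ^ n * f) X ^ n / n!` of the moments of `h`. -/
def momentSeries (φ : B →ₗ[K] K) (h : B) : B →ₗ[K] K⟦X⟧ where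
  toFun f := PowerSeries.mk fun n => φ (h ^ n * f) / n.factorial
  map_add' f g := by ext n; simp [mul_add, add_div]
  map_smul' c f := by ext n; simp [mul_div_assoc]

lemma coeff_momentSeries (φ : B →ₗ[K] K) (h f : B) (n : ℕ) :
    coeff n (momentSeries φ h f) = φ (h ^ n * f) / n.factorial :=
  coeff_mk n fun n => φ (h ^ n * f) / n.factorial

lemma constantCoeff_momentSeries (φ : B →ₗ[K] K) (h f : B) :
    constantCoeff (momentSeries φ h f) = φ f := by
  simp [← coeff_zero_eq_constantCoeff_apply, coeff_momentSeries]

lemma derivative_momentSeries [CharZero K] (φ : B →ₗ[K] K) (h f : B) :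
    d⁄dX K (momentSeries φ h f) = momentSeries φ h (h * f) := by
  ext n
  rw [coeff_derivative, coeff_momentSeries, coeff_momentSeries, ← mul_assoc, ← pow_succ,
    Nat.factorial_succ]
  push_cast
  field_simp

lemma momentSeries_eq_smul_of_forall {φ ψ : B →ₗ[K] K} {a : B} {c : K}
    (hφ : ∀ f, φ (a * f) = c * ψ f) (h f : B) :
    momentSeries φ h (a * f) = c • momentSeries ψ h f := by
  ext n
  rw [coeff_momentSeries, mul_left_comm, hφ, map_smul, coeff_momentSeries, smul_eq_mul,
    mul_div_assoc]

/-- The linear functional on Laurent polynomials with `T ^ d ↦ g d`. -/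
def laurentFunctional (g : ℤ → K) : K[T;T⁻¹] →ₗ[K] K :=
  Finsupp.linearCombination K g ∘ₗ (AddMonoidAlgebra.coeffLinearEquiv K).toLinearMap

lemma laurentFunctional_T (g : ℤ → K) (d : ℤ) :
    laurentFunctional g (LaurentPolynomial.T d) = g d := by
  simp [laurentFunctional, LaurentPolynomial.T, -LaurentPolynomial.single_eq_C_mul_T]

end MomentSeries

section BesselSeries

open PowerSeries LaurentPolynomial

/-- The Laurent polynomial `T + T⁻¹`, whose exponential `exp (t (T + T⁻¹))` generates the Bessel
functions `I_d(2t)`. -/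
def laurentStep : ℝ[T;T⁻¹] := T 1 + T (-1)

/-- The sign of `d` for odd `d`, and `0` for even `d`. -/
def oddSign (d : ℤ) : ℝ := if Odd d then (d.sign : ℝ) else 0

/-- The power series of `t ↦ I_d(2t)`. -/
def besselSeries (d : ℤ) : ℝ⟦X⟧ :=
  momentSeries (laurentFunctional (Pi.single 0 1)) laurentStep (T d)

/-- The analogue of the Bessel series in which the constant term functional is replaced by
`T ^ d ↦ oddSign d`. -/
def oddSignSeries : ℝ[T;T⁻¹] →ₗ[ℝ] ℝ⟦X⟧ := momentSeries (laurentFunctional oddSign) laurentStep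

lemma constantCoeff_besselSeries (d : ℤ) :
    constantCoeff (besselSeries d) = if d = 0 then 1 else 0 := by
  rw [besselSeries, constantCoeff_momentSeries, laurentFunctional_T, Pi.single_apply]

lemma coeff_besselSeries_eq_sum (n : ℕ) (d : ℤ) :
    coeff n (besselSeries d) =
      ∑ p ∈ antidiagonal n,
        if (p.1 : ℤ) - p.2 + d = 0 then 1 / ((p.1.factorial : ℝ) * p.2.factorial) else 0 := by
  have hmoment : laurentStep ^ n * T d =
      ∑ p ∈ antidiagonal n, (n.choose p.1 : ℝ) • T ((p.1 : ℤ) - p.2 + d) := by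
    rw [laurentStep, (Commute.all _ _).add_pow', sum_mul]
    refine sum_congr rfl fun p _ => ?_
    simp only [T_pow, ← T_add, Nat.cast_smul_eq_nsmul, smul_mul_assoc]
    ring_nf
  rw [besselSeries, coeff_momentSeries, hmoment, map_sum, sum_div]
  refine sum_congr rfl fun p hp => ?_
  rw [map_smul, laurentFunctional_T, Pi.single_apply, smul_eq_mul, mul_ite, mul_one, mul_zero,
    ite_div, zero_div]
  congr 1
  rw [← mem_antidiagonal.1 hp, Nat.choose_symm_add, Nat.add_choose,
    Nat.cast_div_charZero (Nat.factorial_mul_factorial_dvd_factorial_add _ _), Nat.cast_mul,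
    div_right_comm, div_self (Nat.cast_ne_zero.2 (Nat.factorial_ne_zero _))]

lemma besselSeries_neg (d : ℤ) : besselSeries (-d) = besselSeries d := by
  ext n
  rw [coeff_besselSeries_eq_sum, coeff_besselSeries_eq_sum, ← sum_equiv (Equiv.prodComm ℕ ℕ)
    (s := antidiagonal n) (by simp [add_comm]) fun _ _ => rfl]
  refine sum_congr rfl fun p _ => ?_
  simp only [Equiv.prodComm_apply, Prod.fst_swap, Prod.snd_swap, mul_comm (p.2.factorial : ℝ)]
  congr 1
  rw [eq_iff_iff]
  omega

lemma besselSeries_natAbs (d : ℤ) : besselSeries d.natAbs = besselSeries d := by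
  rcases Int.natAbs_eq d with h | h <;> rw [h] <;> simp [besselSeries_neg]

lemma coeff_besselSeries (m d : ℕ) :
    coeff (2 * m + d) (besselSeries d) = 1 / ((m.factorial : ℝ) * (m + d).factorial) := by
  rw [coeff_besselSeries_eq_sum, sum_eq_single (m, m + d)]
  · simp
  · rintro ⟨p, q⟩ hpq hne
    rw [HasAntidiagonal.mem_antidiagonal] at hpq
    refine if_neg fun h => hne ?_
    rw [Prod.mk.injEq]
    omega
  · intro h
    exact absurd (HasAntidiagonal.mem_antidiagonal.2 (by ring)) h

lemma coeff_besselSeries_of_notMem_range {n d : ℕ} (hn : n ∉ Set.range fun m => 2 * m + d) :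
    coeff n (besselSeries d) = 0 := by
  rw [coeff_besselSeries_eq_sum]
  refine sum_eq_zero fun p hp => if_neg fun h => hn ⟨p.1, ?_⟩
  have := mem_antidiagonal.1 hp
  simp only
  omega

lemma oddSign_sub_oddSign (d : ℤ) :
    oddSign (d - 1) - oddSign (d + 1) = if d = 0 then -2 else 0 := by
  unfold oddSign
  rcases eq_or_ne d 0 with rfl | hd
  · norm_num
  have hodd : Odd (d - 1) ↔ Odd (d + 1) := by
    simp only [Int.odd_iff]
    omega
  rw [if_neg hd, if_congr hodd rfl rfl]
  split_ifs with h
  · have hsign : (d - 1).sign = (d + 1).sign := by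
      rw [Int.odd_iff] at h
      rcases lt_or_gt_of_ne hd with hneg | hpos
      · rw [Int.sign_eq_neg_one_of_neg (by omega), Int.sign_eq_neg_one_of_neg (by omega)]
      · rw [Int.sign_eq_one_of_pos (by omega), Int.sign_eq_one_of_pos (by omega)]
    rw [hsign, sub_self]
  · exact sub_self 0

lemma oddSignSeries_inv_sub_mul_T (d : ℤ) :
    oddSignSeries ((T (-1) - T 1) * T d) = (-2 : ℝ) • besselSeries d := by
  refine momentSeries_eq_smul_of_forall (fun f => ?_) _ _
  induction f using LaurentPolynomial.induction_on' with
  | add f g hf hg => simp only [mul_add, map_add, hf, hg]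
  | C_mul_T n a =>
    rw [← LaurentPolynomial.smul_eq_C_mul, mul_smul_comm, map_smul, map_smul, sub_mul, ← T_add,
      ← T_add, map_sub, laurentFunctional_T, laurentFunctional_T, laurentFunctional_T,
      neg_add_eq_sub, add_comm 1, oddSign_sub_oddSign, Pi.single_apply]
    simp only [smul_eq_mul]
    split_ifs <;> ring

/-- The product-to-sum formula behind both Bessel determinants: `ε = 1` and `ε = -1` give the
cosine-like and the sine-like case. -/
lemma oddSignSeries_mul_mul {ε : ℝ} (hε : ε * ε = 1) (a b : ℤ) :
    oddSignSeries ((T (-1) - T 1) * (T a + ε • T (-a)) * (T b + ε • T (-b))) =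
      (-4 * ε) • (besselSeries (a - b) + ε • besselSeries (a + b)) := by
  have hexpand : (T a + ε • T (-a)) * (T b + ε • T (-b)) =
      (T (a + b) + T (-(a + b)) + ε • (T (a - b) + T (-(a - b))) : ℝ[T;T⁻¹]) := by
    simp only [add_mul, mul_add, mul_smul_comm, smul_mul_assoc, smul_add, smul_smul,
      ← T_add, hε, one_smul]
    ring_nf
  rw [mul_assoc, hexpand]
  simp only [mul_add, mul_smul_comm, map_add, map_smul, oddSignSeries_inv_sub_mul_T,
    besselSeries_neg, smul_add, smul_smul]
  rw [mul_assoc, hε]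
  module

end BesselSeries

section Alternant

open PowerSeries

open Classical in
/-- One step of a walk in the chamber of monotone points of `ℕᵐ`: the sum of `E` over the monotone
points obtained from `x` by incrementing one coordinate. Its `n`-th power sums `E` over the end
points of the `n`-step walks from `x`. -/
def chamberStep (R : Type*) [CommRing R] (m : ℕ) : Module.End R ((Fin m → ℕ) → R) where
  toFun E x := ∑ j, if Monotone (x + Pi.single j 1) then E (x + Pi.single j 1) else 0
  map_add' E E' := by
    ext x
    simp only [Pi.add_apply, ← sum_add_distrib]
    exact sum_congr rfl fun j _ => by split_ifs <;> simp
  map_smul' c E := by ext x; simp [mul_sum]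

variable {R : Type*} [CommRing R] {m : ℕ}

open Classical in
lemma chamberStep_apply (E : (Fin m → ℕ) → R) (x : Fin m → ℕ) :
    chamberStep R m E x =
      ∑ j, if Monotone (x + Pi.single j 1) then E (x + Pi.single j 1) else 0 :=
  rfl

lemma chamberStep_pow_congr {E E' : (Fin m → ℕ) → R} (h : ∀ x, Monotone x → E x = E' x) (n : ℕ)
    {x : Fin m → ℕ} (hx : Monotone x) :
    (chamberStep R m ^ n) E x = (chamberStep R m ^ n) E' x := by
  induction n generalizing x with
  | zero => exact h x hx
  | succ n ih =>
    simp only [pow_succ', Module.End.mul_apply, chamberStep_apply]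
    refine sum_congr rfl fun j _ => ?_
    split_ifs with hj
    · exact ih hj
    · rfl

/-- The generalized Vandermonde determinant with exponents `x j + j`. -/
def alternant (z : Fin m → R) (x : Fin m → ℕ) : R :=
  (Matrix.of fun i j : Fin m => z i ^ (x j + j)).det

lemma alternant_zero (z : Fin m → R) : alternant z 0 = (Matrix.vandermonde z).det := by
  simp [alternant, Matrix.vandermonde]

lemma alternant_apply (z : Fin m → R) (x : Fin m → ℕ) :
    alternant z x = ∑ σ : Equiv.Perm (Fin m), Equiv.Perm.sign σ • ∏ j, z (σ j) ^ (x j + j) :=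
  Matrix.det_apply _

lemma sum_mul_alternant (z : Fin m → R) (x : Fin m → ℕ) :
    (∑ i, z i) * alternant z x = ∑ j, alternant z (x + Pi.single j 1) := by
  simp_rw [alternant_apply]
  rw [sum_comm, mul_sum]
  refine sum_congr rfl fun σ _ => ?_
  rw [← smul_sum, mul_smul_comm, ← Equiv.sum_comp σ, sum_mul]
  congr 1
  refine sum_congr rfl fun j _ => ?_
  have hprod : ∏ i, z (σ i) ^ (Pi.single j 1 : Fin m → ℕ) i = z (σ j) := by
    simp [Pi.single_apply, prod_ite_eq']
  simp only [← hprod, ← prod_mul_distrib, ← pow_add, Pi.add_apply]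
  exact prod_congr rfl fun i _ => by ring

lemma alternant_add_single_eq_zero (z : Fin m → R) {x : Fin m → ℕ} (hx : Monotone x) {j : Fin m}
    (h : ¬ Monotone (x + Pi.single j 1)) : alternant z (x + Pi.single j 1) = 0 := by
  cases m with
  | zero => exact j.elim0
  | succ m =>
    rw [Fin.monotone_iff_le_succ] at h
    push Not at h
    obtain ⟨i, hi⟩ := h
    have hle : x i.castSucc ≤ x i.succ := hx i.castSucc_lt_succ.le
    have hij : i.castSucc = j := by
      by_contra hne
      simp only [Pi.add_apply, Pi.single_eq_of_ne hne, add_zero] at hi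
      exact hi.not_ge (hle.trans (Nat.le_add_right _ _))
    subst hij
    have hne : i.succ ≠ i.castSucc := i.castSucc_lt_succ.ne'
    simp only [Pi.add_apply, Pi.single_eq_same, Pi.single_eq_of_ne hne] at hi
    refine Matrix.det_zero_of_column_eq hne fun a => ?_
    simp only [Matrix.of_apply, Pi.add_apply, Pi.single_eq_same, Pi.single_eq_of_ne hne,
      Fin.val_succ, Fin.val_castSucc]
    congr 1
    omega

lemma chamberStep_alternant {A : Type*} [CommRing A] [Algebra R A] (L : A →ₗ[R] R) (z : Fin m → A)
    {x : Fin m → ℕ} (hx : Monotone x) :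
    chamberStep R m (fun y => L (alternant z y)) x = L ((∑ i, z i) * alternant z x) := by
  rw [chamberStep_apply, sum_mul_alternant, map_sum]
  refine sum_congr rfl fun j _ => ?_
  split_ifs with h
  · rfl
  · rw [alternant_add_single_eq_zero z hx h, map_zero]

/-- The reflection principle: monotone walks are counted by an alternating sum, namely the moments
of `∑ i, z i` on alternants. -/
lemma chamberStep_pow_alternant {A : Type*} [CommRing A] [Algebra R A] (L : A →ₗ[R] R⟦X⟧)
    (z : Fin m → A) (hL : ∀ f, d⁄dX R (L f) = L ((∑ i, z i) * f)) (n : ℕ) {x : Fin m → ℕ}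
    (hx : Monotone x) :
    (chamberStep R m ^ n) (fun y => constantCoeff (L (alternant z y))) x =
      n.factorial * coeff n (L (alternant z x)) := by
  induction n generalizing x with
  | zero => simp
  | succ n ih =>
    rw [pow_succ', Module.End.mul_apply, Nat.factorial_succ]
    have hstep := chamberStep_alternant (n.factorial • coeff n ∘ₗ L) z hx
    simp only [LinearMap.smul_apply, LinearMap.comp_apply, nsmul_eq_mul, ← hL,
      coeff_derivative] at hstep
    have hcongr := chamberStep_pow_congr (fun y hy => ih hy) 1 hx
    rw [pow_one] at hcongr
    rw [hcongr, hstep]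
    push_cast
    ring

end Alternant

section AlternatingSum

variable {m : ℕ}

/-- Two sequences are parity equivalent if they agree modulo `2` and entries of opposite parity are
ordered in the same way in both. -/
def ParityEquiv (a b : Fin m → ℕ) : Prop :=
  (∀ i, a i ≡ b i [MOD 2]) ∧ ∀ i j, ¬ a i ≡ a j [MOD 2] → (a i < a j ↔ b i < b j)

lemma ParityEquiv.comp {a b : Fin m → ℕ} (h : ParityEquiv a b) (σ : Equiv.Perm (Fin m)) :
    ParityEquiv (a ∘ σ) (b ∘ σ) :=
  ⟨fun i => h.1 (σ i), fun i j => h.2 (σ i) (σ j)⟩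

lemma ParityEquiv.oddSign_sub_eq {a b : Fin m → ℕ} (h : ParityEquiv a b) (i j : Fin m) :
    oddSign (a i - a j) = oddSign (b i - b j) := by
  have hi := h.1 i
  have hj := h.1 j
  have hij := h.2 i j
  have hji := h.2 j i
  simp only [Nat.ModEq] at hi hj hij hji
  have hodd : Odd ((a i : ℤ) - a j) ↔ Odd ((b i : ℤ) - b j) := by
    simp only [Int.odd_iff]
    omega
  unfold oddSign
  rw [if_congr hodd rfl rfl]
  refine ite_congr rfl (fun hb => ?_) fun _ => rfl
  have ha := hodd.2 hb
  rw [Int.odd_iff] at ha hb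
  rcases lt_or_ge (a i) (a j) with hlt | hge
  · rw [Int.sign_eq_neg_one_of_neg (by omega), Int.sign_eq_neg_one_of_neg (by omega)]
  · rw [Int.sign_eq_one_of_pos (by omega), Int.sign_eq_one_of_pos (by omega)]

lemma parityEquiv_comp_swap {a : Fin m → ℕ} (ha : StrictMono a) {p q : Fin m}
    (hpq : (q : ℕ) = p + 1) (hmod : a p ≡ a q [MOD 2]) :
    ParityEquiv (a ∘ Equiv.swap p q) a := by
  have hparity (i : Fin m) : a (Equiv.swap p q i) ≡ a i [MOD 2] := by
    rw [Equiv.swap_apply_def]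
    split_ifs with hp hq
    · exact hp ▸ hmod.symm
    · exact hq ▸ hmod
    · rfl
  refine ⟨hparity, fun i j hij => ?_⟩
  have hij' : ¬ a i ≡ a j [MOD 2] := fun h => hij (((hparity i).trans h).trans (hparity j).symm)
  rw [Function.comp_apply, Function.comp_apply, ha.lt_iff_lt, ha.lt_iff_lt]
  have hne (r : Fin m) (hp : r ≠ p) (hq : r ≠ q) : (r : ℕ) < p ∨ (q : ℕ) < r := by
    rw [ne_eq, Fin.ext_iff] at hp hq
    omega
  simp only [Fin.lt_def]
  have hnot : ¬ ((i = p ∨ i = q) ∧ (j = p ∨ j = q)) := by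
    rintro ⟨rfl | rfl, rfl | rfl⟩
    exacts [hij' rfl, hij' hmod, hij' hmod.symm, hij' rfl]
  rw [Equiv.swap_apply_def, Equiv.swap_apply_def]
  split_ifs with hip hjp hjq hiq hjp hjq hjp hjq
  all_goals first
    | exact absurd (by tauto) hnot
    | (have := hne j ‹_› ‹_›; omega)
    | (have := hne i ‹_› ‹_›; omega)

lemma parityEquiv_of_strictMono {a b : Fin m → ℕ} (ha : StrictMono a) (hb : StrictMono b)
    (h : ∀ i, a i ≡ b i [MOD 2]) : ParityEquiv a b :=
  ⟨h, fun _ _ _ => ha.lt_iff_lt.trans hb.lt_iff_lt.symm⟩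

lemma parityEquiv_add_val_of_even {x : Fin m → ℕ} (hx : Monotone x) (h : ∀ i, Even (x i)) :
    ParityEquiv (x + Fin.val) Fin.val := by
  refine parityEquiv_of_strictMono (hx.add_strictMono Fin.val_strictMono) Fin.val_strictMono
    fun i => ?_
  have := Nat.even_iff.1 (h i)
  simp only [Nat.ModEq, Pi.add_apply]
  omega

lemma parityEquiv_add_val_of_odd {x : Fin m → ℕ} (hx : Monotone x) (h : ∀ i, Odd (x i)) :
    ParityEquiv (x + Fin.val) (Fin.val + 1) := by
  refine parityEquiv_of_strictMono (hx.add_strictMono Fin.val_strictMono)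
    (Fin.val_strictMono.add_monotone monotone_const) fun i => ?_
  have := Nat.odd_iff.1 (h i)
  simp only [Nat.ModEq, Pi.add_apply, Pi.one_apply]
  omega

lemma exists_succ_not_modEq {x : Fin m → ℕ} {i j : Fin m} (h : ¬ x i ≡ x j [MOD 2]) :
    ∃ p q : Fin m, (q : ℕ) = p + 1 ∧ ¬ x p ≡ x q [MOD 2] := by
  by_contra! hsucc
  have hzero (n : ℕ) (hn : n < m) : x ⟨n, hn⟩ ≡ x ⟨0, by omega⟩ [MOD 2] := by
    induction n with
    | zero => rfl
    | succ n ih => exact (hsucc ⟨n, by omega⟩ ⟨n + 1, hn⟩ rfl).symm.trans (ih _)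
  exact h ((hzero i i.2).trans (hzero j j.2).symm)

/-- The alternating sum of `w` over the rearrangements of `a`. -/
def alternatingSum (w : (Fin m → ℕ) → ℝ) (a : Fin m → ℕ) : ℝ :=
  ∑ σ : Equiv.Perm (Fin m), Equiv.Perm.sign σ • w (a ∘ σ)

lemma alternatingSum_comp_swap (w : (Fin m → ℕ) → ℝ) (a : Fin m → ℕ) {p q : Fin m} (h : p ≠ q) :
    alternatingSum w (a ∘ Equiv.swap p q) = -alternatingSum w a := by
  rw [alternatingSum, alternatingSum, ← sum_neg_distrib]
  refine Fintype.sum_equiv (Equiv.mulLeft (Equiv.swap p q)) _ _ fun σ => ?_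
  simp [Equiv.Perm.sign_swap h, Function.comp_assoc]

variable {w : (Fin m → ℕ) → ℝ}

lemma alternatingSum_eq_mul {η : ℝ} (hη : ∀ a, w (a + 1) = η * w a) (a : Fin m → ℕ) :
    alternatingSum w (a + 1) = η * alternatingSum w a := by
  rw [alternatingSum, alternatingSum, mul_sum]
  refine sum_congr rfl fun σ _ => ?_
  rw [mul_smul_comm, ← hη]
  rfl

variable (hw : ∀ a b, ParityEquiv a b → w a = w b)
include hw

lemma ParityEquiv.alternatingSum_eq {a b : Fin m → ℕ} (h : ParityEquiv a b) :
    alternatingSum w a = alternatingSum w b :=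
  sum_congr rfl fun σ _ => by rw [hw _ _ (h.comp σ)]

lemma alternatingSum_add_val_eq_zero {x : Fin m → ℕ} (hx : Monotone x) {i j : Fin m}
    (h : ¬ x i ≡ x j [MOD 2]) : alternatingSum w (x + Fin.val) = 0 := by
  obtain ⟨p, q, hpq, hmod⟩ := exists_succ_not_modEq h
  have hne : p ≠ q := by rintro rfl; omega
  have hswap : ParityEquiv ((x + Fin.val) ∘ Equiv.swap p q) (x + Fin.val) := by
    refine parityEquiv_comp_swap (hx.add_strictMono Fin.val_strictMono) hpq ?_
    simp only [Nat.ModEq] at hmod ⊢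
    omega
  have := hswap.alternatingSum_eq hw
  rw [alternatingSum_comp_swap w _ hne] at this
  linarith

open Classical in
lemma alternatingSum_add_val [NeZero m] {η : ℝ} (hη : ∀ a, w (a + 1) = η * w a) {x : Fin m → ℕ}
    (hx : Monotone x) :
    alternatingSum w (x + Fin.val) = alternatingSum w Fin.val *
      ((if ∀ i, Even (x i) then 1 else 0) + η * if ∀ i, Odd (x i) then 1 else 0) := by
  by_cases heven : ∀ i, Even (x i)
  · have hodd : ¬ ∀ i, Odd (x i) := fun h => Nat.not_even_iff_odd.2 (h 0) (heven 0)
    rw [if_pos heven, if_neg hodd, (parityEquiv_add_val_of_even hx heven).alternatingSum_eq hw]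
    ring
  by_cases hodd : ∀ i, Odd (x i)
  · rw [if_neg heven, if_pos hodd, (parityEquiv_add_val_of_odd hx hodd).alternatingSum_eq hw,
      alternatingSum_eq_mul hη]
    ring
  · rw [if_neg heven, if_neg hodd]
    obtain ⟨i, hi⟩ := not_forall.1 heven
    obtain ⟨j, hj⟩ := not_forall.1 hodd
    have hij : ¬ x i ≡ x j [MOD 2] := by
      simp only [Nat.ModEq, Nat.odd_iff, Nat.even_iff] at hi hj ⊢
      omega
    rw [alternatingSum_add_val_eq_zero hw hx hij]
    ring

end AlternatingSum

section EvenOddWalks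

open PowerSeries

open Classical in
/-- The number of `n`-step walks in the chamber of `ℕᵐ` from the origin to a point all of whose
coordinates are even. -/
def evenWalk (m n : ℕ) : ℝ :=
  (chamberStep ℝ m ^ n) (fun x => if ∀ i, Even (x i) then 1 else 0) 0

open Classical in
/-- The number of `n`-step walks in the chamber of `ℕᵐ` from the origin to a point all of whose
coordinates are odd. -/
def oddWalk (m n : ℕ) : ℝ :=
  (chamberStep ℝ m ^ n) (fun x => if ∀ i, Odd (x i) then 1 else 0) 0

lemma chamberStep_pow_eq_zero_of_odd {R : Type*} [CommRing R] {m : ℕ} {E : (Fin m → ℕ) → R}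
    (hE : ∀ x, Odd (∑ i, x i) → E x = 0) (n : ℕ) {x : Fin m → ℕ} (hx : Odd (∑ i, x i + n)) :
    (chamberStep R m ^ n) E x = 0 := by
  induction n generalizing x with
  | zero => exact hE x hx
  | succ n ih =>
    rw [pow_succ', Module.End.mul_apply, chamberStep_apply]
    refine sum_eq_zero fun j _ => ite_eq_right_iff.2 fun _ => ih ?_
    simpa [sum_add_distrib, add_assoc, add_comm 1 n] using hx

lemma evenWalk_of_odd (m : ℕ) {n : ℕ} (hn : Odd n) : evenWalk m n = 0 := by
  refine chamberStep_pow_eq_zero_of_odd (fun x hx => if_neg fun h => ?_) n (by simpa using hn)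
  exact Nat.not_even_iff_odd.2 hx (even_sum _ fun i _ => h i)

lemma chamberStep_pow_alternatingSum {m : ℕ} [NeZero m] {w : (Fin m → ℕ) → ℝ}
    (hw : ∀ a b, ParityEquiv a b → w a = w b) {η : ℝ} (hη : ∀ a, w (a + 1) = η * w a) (n : ℕ) :
    (chamberStep ℝ m ^ n) (fun x => alternatingSum w (x + Fin.val)) 0 =
      alternatingSum w Fin.val * (evenWalk m n + η * oddWalk m n) := by
  classical
  have h0 : Monotone (0 : Fin m → ℕ) := monotone_const
  rw [chamberStep_pow_congr (fun x hx => alternatingSum_add_val hw hη hx) n h0]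
  have hlinear : (fun x : Fin m → ℕ => alternatingSum w Fin.val *
        ((if ∀ i, Even (x i) then 1 else 0) + η * if ∀ i, Odd (x i) then 1 else 0)) =
      alternatingSum w Fin.val • ((fun x => if ∀ i, Even (x i) then (1 : ℝ) else 0) +
        η • fun x => if ∀ i, Odd (x i) then (1 : ℝ) else 0) := rfl
  rw [hlinear, map_smul, map_add, map_smul]
  rfl

lemma constantCoeff_alternant {A : Type*} [CommRing A] [Algebra ℝ A] {m : ℕ} (L : A →ₗ[ℝ] ℝ⟦X⟧)
    (z : Fin m → A) (x : Fin m → ℕ) :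
    constantCoeff (L (alternant z x)) =
      alternatingSum (fun a => constantCoeff (L (∏ i, z i ^ a i))) (x + Fin.val) := by
  rw [alternant, ← Matrix.det_transpose, Matrix.det_apply, map_sum, map_sum]
  refine sum_congr rfl fun σ _ => ?_
  rw [Units.smul_def, Units.smul_def, map_zsmul, map_zsmul]
  rfl

lemma factorial_mul_coeff_alternant {A : Type*} [CommRing A] [Algebra ℝ A] {m : ℕ} [NeZero m]
    {L : A →ₗ[ℝ] ℝ⟦X⟧} {z : Fin m → A} (hL : ∀ f, d⁄dX ℝ (L f) = L ((∑ i, z i) * f))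
    (hw : ∀ a b : Fin m → ℕ, ParityEquiv a b →
      constantCoeff (L (∏ i, z i ^ a i)) = constantCoeff (L (∏ i, z i ^ b i)))
    {η : ℝ} (hη : ∀ a : Fin m → ℕ,
      constantCoeff (L (∏ i, z i ^ (a + 1) i)) = η * constantCoeff (L (∏ i, z i ^ a i)))
    (n : ℕ) :
    n.factorial * coeff n (L (alternant z 0)) =
      constantCoeff (L (alternant z 0)) * (evenWalk m n + η * oddWalk m n) := by
  have h0 : Monotone (0 : Fin m → ℕ) := monotone_const
  rw [← chamberStep_pow_alternant L z hL n h0, constantCoeff_alternant L z 0, zero_add,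
    ← chamberStep_pow_alternatingSum hw hη]
  simp_rw [constantCoeff_alternant]

end EvenOddWalks

section BesselDeterminants

open PowerSeries LaurentPolynomial

/-- The symbolic version of the determinant of the `I_{i-j}(2t) + I_{i+j}(2t)`. -/
def besselDetPlus (k : ℕ) : ℝ⟦X⟧ :=
  (Matrix.of fun i j : Fin k => besselSeries ((i : ℕ) - (j : ℕ) : ℤ) +
    besselSeries ((i : ℕ) + (j : ℕ) : ℤ)).det

/-- The symbolic version of the determinant of the `I_{i-j}(2t) - I_{i+j+2}(2t)`. -/
def besselDetMinus (k : ℕ) : ℝ⟦X⟧ :=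
  (Matrix.of fun i j : Fin k => besselSeries ((i : ℕ) - (j : ℕ) : ℤ) -
    besselSeries ((i : ℕ) + (j : ℕ) + 2 : ℤ)).det

lemma constantCoeff_besselDetPlus (k : ℕ) : constantCoeff (besselDetPlus (k + 1)) = 2 := by
  have hdiag : (constantCoeff (R := ℝ)).mapMatrix (Matrix.of fun i j : Fin (k + 1) =>
      besselSeries ((i : ℕ) - (j : ℕ) : ℤ) + besselSeries ((i : ℕ) + (j : ℕ) : ℤ)) =
      Matrix.diagonal fun i : Fin (k + 1) => if i = 0 then 2 else 1 := by
    ext i j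
    simp only [RingHom.mapMatrix_apply, Matrix.map_apply, Matrix.of_apply, map_add,
      constantCoeff_besselSeries, Matrix.diagonal_apply, Fin.ext_iff, Fin.val_zero]
    split_ifs <;> first | omega | norm_num
  rw [besselDetPlus, RingHom.map_det, hdiag, Matrix.det_diagonal, Fin.prod_univ_succ]
  simp [Fin.succ_ne_zero]

lemma constantCoeff_besselDetMinus (k : ℕ) : constantCoeff (besselDetMinus k) = 1 := by
  have hone : (constantCoeff (R := ℝ)).mapMatrix (Matrix.of fun i j : Fin k =>
      besselSeries ((i : ℕ) - (j : ℕ) : ℤ) - besselSeries ((i : ℕ) + (j : ℕ) + 2 : ℤ)) = 1 := by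
    ext i j
    simp only [RingHom.mapMatrix_apply, Matrix.map_apply, Matrix.of_apply, map_sub,
      constantCoeff_besselSeries, Matrix.one_apply, Fin.ext_iff]
    split_ifs <;> first | omega | norm_num
  rw [besselDetMinus, RingHom.map_det, hone, Matrix.det_one]

/-- The functional `T₁ ^ d₁ ⋯ T_k ^ d_k ↦ ∏ i, oddSign (d i)` on Laurent polynomials in `k`
variables, extended to an exponential generating function of moments of `∑ i, (T_i + T_i⁻¹)`. -/
abbrev oddSignFunctional (k : ℕ) : (⨂[ℝ] _ : Fin k, ℝ[T;T⁻¹]) →ₗ[ℝ] ℝ⟦X⟧ :=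
  productFunctional (Fin k) oddSignSeries

variable {k : ℕ}

lemma derivative_oddSignFunctional (F : ⨂[ℝ] _ : Fin k, ℝ[T;T⁻¹]) :
    d⁄dX ℝ (oddSignFunctional k F) =
      oddSignFunctional k ((∑ i, inVariable ℝ i laurentStep) * F) :=
  derivation_productFunctional _ (derivative_momentSeries _ _) F

lemma constantCoeff_oddSignFunctional_prod_T (d : Fin k → ℤ) :
    constantCoeff (oddSignFunctional k (∏ i, inVariable ℝ i (T (d i)))) = ∏ i, oddSign (d i) := by
  rw [prod_inVariable, productFunctional_tprod, map_prod]
  simp only [oddSignSeries, constantCoeff_momentSeries, laurentFunctional_T]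

lemma oddSignFunctional_prod_mul_det_sq (α : Fin k → ℤ) {ε : ℝ} (hε : ε * ε = 1) :
    oddSignFunctional k ((∏ i, inVariable ℝ i (T (-1) - T 1)) *
        (Matrix.of fun i j => inVariable ℝ i (T (α j) + ε • T (-α j))).det ^ 2) =
      (k.factorial * (-4 * ε) ^ k : ℝ) • (Matrix.of fun i j =>
        besselSeries (α i - α j) + ε • besselSeries (α i + α j)).det := by
  have hentry : (Matrix.of fun i j => oddSignSeries
        ((T (-1) - T 1) * (T (α i) + ε • T (-α i)) * (T (α j) + ε • T (-α j)))) =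
      (-4 * ε) • Matrix.of fun i j => besselSeries (α i - α j) + ε • besselSeries (α i + α j) := by
    ext1 i j
    exact oddSignSeries_mul_mul hε _ _
  rw [sq, ← mul_assoc, ← Matrix.det_mul_column]
  simp only [Matrix.of_apply, ← map_mul]
  rw [productFunctional_det_mul_det, hentry, Matrix.det_smul_of_tower, Fintype.card_fin, mul_smul,
    Nat.cast_smul_eq_nsmul]

/-- The `2k` points `T_i`, `T_i⁻¹`, whose alternant yields `besselDetPlus k`. -/
def evenPoint (k : ℕ) : Fin (k + k) → ⨂[ℝ] _ : Fin k, ℝ[T;T⁻¹] :=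
  Fin.append (fun i => inVariable ℝ i (T 1)) fun i => inVariable ℝ i (T (-1))

/-- The `2k + 2` points `T_i`, `T_i⁻¹`, `1`, `-1`, whose alternant yields `besselDetMinus k`. -/
def oddPoint (k : ℕ) : Fin (k + k + 2) → ⨂[ℝ] _ : Fin k, ℝ[T;T⁻¹] :=
  Fin.append (evenPoint k) ![1, -1]

lemma sum_evenPoint (k : ℕ) : ∑ i, evenPoint k i = ∑ i, inVariable ℝ i laurentStep := by
  simp only [evenPoint, Fin.sum_univ_add, Fin.append_left, Fin.append_right, laurentStep, map_add,
    sum_add_distrib]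

lemma sum_oddPoint (k : ℕ) : ∑ i, oddPoint k i = ∑ i, inVariable ℝ i laurentStep := by
  simp only [oddPoint, Fin.sum_univ_add, Fin.append_left, Fin.append_right, ← sum_evenPoint,
    Fin.sum_univ_two, Matrix.cons_val_zero, Matrix.cons_val_one, add_neg_cancel, add_zero]

lemma prod_evenPoint_pow (a : Fin (k + k) → ℕ) :
    ∏ r, evenPoint k r ^ a r =
      ∏ i, inVariable ℝ i (T ((a (Fin.castAdd k i) : ℤ) - a (Fin.natAdd k i))) := by
  simp only [evenPoint, Fin.prod_univ_add, Fin.append_left, Fin.append_right, ← map_pow, T_pow,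
    ← prod_mul_distrib, ← map_mul, ← T_add]
  refine prod_congr rfl fun i _ => ?_
  ring_nf

lemma prod_oddPoint_pow (a : Fin (k + k + 2) → ℕ) :
    ∏ r, oddPoint k r ^ a r = ((-1) ^ a (Fin.natAdd (k + k) 1) : ℝ) •
      ∏ i, inVariable ℝ i
        (T ((a (Fin.castAdd 2 (Fin.castAdd k i)) : ℤ) - a (Fin.castAdd 2 (Fin.natAdd k i)))) := by
  rw [Fin.prod_univ_add, Fin.prod_univ_two, Algebra.smul_def, map_pow, map_neg, map_one, mul_comm]
  simp only [oddPoint, Fin.append_left, Fin.append_right, Matrix.cons_val_zero,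
    Matrix.cons_val_one, one_pow, one_mul, prod_evenPoint_pow fun i => a (Fin.castAdd 2 i)]

lemma constantCoeff_oddSignFunctional_prod_evenPoint_pow (a : Fin (k + k) → ℕ) :
    constantCoeff (oddSignFunctional k (∏ r, evenPoint k r ^ a r)) =
      ∏ i, oddSign (a (Fin.castAdd k i) - a (Fin.natAdd k i)) := by
  rw [prod_evenPoint_pow, constantCoeff_oddSignFunctional_prod_T]

lemma constantCoeff_oddSignFunctional_prod_oddPoint_pow (a : Fin (k + k + 2) → ℕ) :
    constantCoeff (oddSignFunctional k (∏ r, oddPoint k r ^ a r)) =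
      (-1) ^ a (Fin.natAdd (k + k) 1) * ∏ i,
        oddSign (a (Fin.castAdd 2 (Fin.castAdd k i)) - a (Fin.castAdd 2 (Fin.natAdd k i))) := by
  rw [prod_oddPoint_pow, map_smul, constantCoeff_smul,
    constantCoeff_oddSignFunctional_prod_T, smul_eq_mul]

lemma inVariable_T_one_mul (i : Fin k) :
    inVariable ℝ i (T 1 : ℝ[T;T⁻¹]) * inVariable ℝ i (T (-1)) = 1 := by
  rw [← map_mul, ← T_add, add_neg_cancel, T_zero, map_one]

lemma oddSignFunctional_alternant_evenPoint (k : ℕ) :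
    (4 : ℝ) • oddSignFunctional (k + 1) (alternant (evenPoint (k + 1)) 0) =
      ((-1) ^ (k + 1).choose 2 * ((k + 1).factorial * (-4) ^ (k + 1)) : ℝ) •
        besselDetPlus (k + 1) := by
  have hsq := oddSignFunctional_prod_mul_det_sq (fun i : Fin (k + 1) => (i : ℤ)) (one_mul (1 : ℝ))
  have hdet := det_pow_add_pow (inVariable_T_one_mul (k := k + 1))
  simp only [← map_pow, ← map_add, T_pow, mul_one, mul_neg] at hdet
  simp only [one_smul, mul_one, hdet] at hsq
  rw [besselDetPlus, mul_smul, ← hsq, alternant_zero, evenPoint,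
    det_vandermonde_append_inv inVariable_T_one_mul, ← productFunctional_algebraMap_mul,
    ← productFunctional_algebraMap_mul]
  simp only [map_sub, map_pow, map_neg, map_one, map_ofNat]
  congr 1
  ring

lemma oddSignFunctional_alternant_oddPoint (k : ℕ) :
    oddSignFunctional k (alternant (oddPoint k) 0) =
      (2 * (-1) ^ (k.choose 2 + k + 1) * (k.factorial * 4 ^ k) : ℝ) • besselDetMinus k := by
  have hsq := oddSignFunctional_prod_mul_det_sq (fun i : Fin k => (i : ℤ) + 1)
    (by norm_num : (-1 : ℝ) * -1 = 1)
  have hdet := det_pow_sub_pow (inVariable_T_one_mul (k := k))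
  simp only [← map_pow, ← map_sub, T_pow, mul_one, mul_neg, Nat.cast_add, Nat.cast_one] at hdet
  simp only [neg_smul, one_smul, ← sub_eq_add_neg, hdet, mul_neg, mul_one, neg_neg,
    add_sub_add_right_eq_sub, add_add_add_comm _ (1 : ℤ), one_add_one_eq_two] at hsq
  rw [besselDetMinus, mul_smul, ← hsq, alternant_zero, oddPoint, evenPoint,
    det_vandermonde_append_inv_one_neg_one inVariable_T_one_mul,
    ← productFunctional_algebraMap_mul]
  simp only [map_sub, map_mul, map_pow, map_neg, map_one, map_ofNat]

/-- Evaluating at `n = 0` determines the ratio of the constants `c` and `K`. -/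
lemma factorial_mul_coeff_of_smul_alternant {m : ℕ} [NeZero m]
    {z : Fin m → ⨂[ℝ] _ : Fin k, ℝ[T;T⁻¹]} (hz : ∑ i, z i = ∑ i, inVariable ℝ i laurentStep)
    (hw : ∀ a b : Fin m → ℕ, ParityEquiv a b →
      constantCoeff (oddSignFunctional k (∏ i, z i ^ a i)) =
        constantCoeff (oddSignFunctional k (∏ i, z i ^ b i)))
    {η : ℝ} (hη : ∀ a : Fin m → ℕ, constantCoeff (oddSignFunctional k (∏ i, z i ^ (a + 1) i)) =
      η * constantCoeff (oddSignFunctional k (∏ i, z i ^ a i)))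
    {P : ℝ⟦X⟧} {c K : ℝ} (hK : K ≠ 0)
    (hP : c • oddSignFunctional k (alternant z 0) = K • P) (n : ℕ) :
    n.factorial * coeff n P = constantCoeff P * (evenWalk m n + η * oddWalk m n) := by
  have hcoeff := congrArg (coeff n) hP
  have hconst := congrArg constantCoeff hP
  have hL := factorial_mul_coeff_alternant
    (fun F => by rw [hz]; exact derivative_oddSignFunctional F) hw hη n
  simp only [map_smul, constantCoeff_smul, smul_eq_mul] at hcoeff hconst
  refine mul_left_cancel₀ hK ?_
  linear_combination (-n.factorial : ℝ) * hcoeff + (evenWalk m n + η * oddWalk m n) * hconst +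
    c * hL

lemma factorial_mul_coeff_besselDetPlus (k n : ℕ) :
    n.factorial * coeff n (besselDetPlus (k + 1)) =
      2 * (evenWalk (2 * (k + 1)) n + oddWalk (2 * (k + 1)) n) := by
  have h := factorial_mul_coeff_of_smul_alternant (sum_evenPoint (k + 1)) (fun a b hab => ?_)
    (η := 1) (fun a => ?_) ?_ (oddSignFunctional_alternant_evenPoint k) n
  · rwa [constantCoeff_besselDetPlus, one_mul, ← two_mul] at h
  · simp only [constantCoeff_oddSignFunctional_prod_evenPoint_pow, hab.oddSign_sub_eq]
  · simp [constantCoeff_oddSignFunctional_prod_evenPoint_pow]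
  · positivity

lemma factorial_mul_coeff_besselDetMinus (k n : ℕ) :
    n.factorial * coeff n (besselDetMinus k) =
      evenWalk (2 * (k + 1)) n - oddWalk (2 * (k + 1)) n := by
  have h := factorial_mul_coeff_of_smul_alternant (sum_oddPoint k) (fun a b hab => ?_) (η := -1)
    (fun a => ?_) ?_ ((one_smul ℝ _).trans (oddSignFunctional_alternant_oddPoint k)) n
  · rwa [constantCoeff_besselDetMinus, one_mul, neg_one_mul, ← sub_eq_add_neg, ← two_mul,
      ← mul_add_one] at h
  · simp only [constantCoeff_oddSignFunctional_prod_oddPoint_pow, hab.oddSign_sub_eq]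
    rw [neg_one_pow_eq_pow_mod_two, hab.1, ← neg_one_pow_eq_pow_mod_two]
  · rw [constantCoeff_oddSignFunctional_prod_oddPoint_pow,
      constantCoeff_oddSignFunctional_prod_oddPoint_pow]
    simp [pow_succ]
  · positivity

end BesselDeterminants

section Evaluation

open PowerSeries

variable {R : Type*} [NormedCommRing R]

lemma coeff_mul_mul_pow (F G : R⟦X⟧) (t : R) (n : ℕ) :
    coeff n (F * G) * t ^ n =
      ∑ p ∈ antidiagonal n, coeff p.1 F * t ^ p.1 * (coeff p.2 G * t ^ p.2) := by
  rw [coeff_mul, sum_mul]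
  refine sum_congr rfl fun p hp => ?_
  rw [← HasAntidiagonal.mem_antidiagonal.1 hp, pow_add]
  ring

/-- The ring of power series that converge absolutely at `t`. -/
def absSummableAt (t : R) : Subring R⟦X⟧ where
  carrier := {F | Summable fun n => ‖coeff n F * t ^ n‖}
  zero_mem' := by simp
  one_mem' := summable_of_hasFiniteSupport <| (Set.finite_singleton 0).subset fun n hn => by
    by_contra h
    simp [coeff_one, show n ≠ 0 from h] at hn
  neg_mem' {F} hF := by simpa using hF
  add_mem' {F G} hF hG := (hF.add hG).of_nonneg_of_le (fun _ => norm_nonneg _) fun n => by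
    rw [map_add, add_mul]
    exact norm_add_le _ _
  mul_mem' {F G} hF hG := by
    simpa only [Set.mem_ofPred_eq, coeff_mul_mul_pow] using
      summable_norm_sum_mul_antidiagonal_of_summable_norm hF hG

variable [CompleteSpace R]

lemma summable_coeff_mul_pow {t : R} (F : absSummableAt t) :
    Summable fun n => coeff n (F : R⟦X⟧) * t ^ n :=
  Summable.of_norm F.2

/-- Evaluation at `t` of the power series that converge absolutely there. -/
def evalAt (t : R) : absSummableAt t →+* R where
  toFun F := ∑' n, coeff n (F : R⟦X⟧) * t ^ n
  map_zero' := by simp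
  map_one' := by
    rw [tsum_eq_single 0 fun n hn => by simp [coeff_one, hn]]
    simp
  map_add' F G := by
    simpa [add_mul] using (summable_coeff_mul_pow F).tsum_add (summable_coeff_mul_pow G)
  map_mul' F G := by
    simpa [coeff_mul_mul_pow] using
      (tsum_mul_tsum_eq_tsum_sum_antidiagonal_of_summable_norm F.2 G.2).symm

lemma hasSum_evalAt {t : R} (F : absSummableAt t) :
    HasSum (fun n => coeff n (F : R⟦X⟧) * t ^ n) (evalAt t F) :=
  (summable_coeff_mul_pow F).hasSum

lemma hasSum_coeff_det {ι : Type*} [Fintype ι] [DecidableEq ι] {t : R} {M : Matrix ι ι R⟦X⟧}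
    {V : Matrix ι ι R} (hM : ∀ i j, M i j ∈ absSummableAt t)
    (hV : ∀ i j, HasSum (fun n => coeff n (M i j) * t ^ n) (V i j)) :
    HasSum (fun n => coeff n M.det * t ^ n) V.det := by
  let M' : Matrix ι ι (absSummableAt t) := Matrix.of fun i j => ⟨M i j, hM i j⟩
  have hdet : (M'.det : R⟦X⟧) = M.det := (absSummableAt t).subtype.map_det M'
  have heval : evalAt t M'.det = V.det := by
    rw [RingHom.map_det]
    congr 1
    ext i j
    exact (hV i j).tsum_eq
  rw [← hdet, ← heval]
  exact hasSum_evalAt M'.det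

lemma coeff_besselSeries_mul_pow (t : ℝ) (d : ℤ) (m : ℕ) :
    coeff (2 * m + d.natAbs) (besselSeries d) * t ^ (2 * m + d.natAbs) =
      t ^ (2 * m + d.natAbs) / ((m.factorial : ℝ) * (m + d.natAbs).factorial) := by
  rw [← besselSeries_natAbs, coeff_besselSeries, one_div_mul_eq_div]

lemma injective_two_mul_add (d : ℕ) : Function.Injective fun m : ℕ => 2 * m + d :=
  fun a b h => by simpa using h

lemma summable_besselI (d : ℤ) (t : ℝ) :
    Summable fun m : ℕ =>
      ‖t ^ (2 * m + d.natAbs) / ((m.factorial : ℝ) * (m + d.natAbs).factorial)‖ := by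
  refine ((Real.summable_pow_div_factorial (t ^ 2)).mul_left (|t| ^ d.natAbs)).of_nonneg_of_le
    (fun _ => norm_nonneg _) fun m => ?_
  have hone : (1 : ℝ) ≤ (m + d.natAbs).factorial := Nat.one_le_cast.2 (Nat.factorial_pos _)
  calc ‖t ^ (2 * m + d.natAbs) / ((m.factorial : ℝ) * (m + d.natAbs).factorial)‖
      = |t| ^ d.natAbs * ((t ^ 2) ^ m / (m.factorial * (m + d.natAbs).factorial)) := by
        simp only [norm_div, norm_pow, norm_mul, Real.norm_eq_abs, Nat.abs_cast, pow_add, pow_mul,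
          sq_abs]
        ring
    _ ≤ |t| ^ d.natAbs * ((t ^ 2) ^ m / m.factorial) := by
        gcongr
        exact le_mul_of_one_le_right (Nat.cast_nonneg _) hone

lemma besselSeries_mem_absSummableAt (d : ℤ) (t : ℝ) : besselSeries d ∈ absSummableAt t := by
  refine ((injective_two_mul_add d.natAbs).summable_iff fun n hn => ?_).1 ?_
  · rw [← besselSeries_natAbs, coeff_besselSeries_of_notMem_range hn, zero_mul, norm_zero]
  · simpa only [Function.comp_def, coeff_besselSeries_mul_pow] using summable_besselI d t

lemma hasSum_coeff_besselSeries (d : ℤ) (t : ℝ) :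
    HasSum (fun n => coeff n (besselSeries d) * t ^ n) (besselI d t) := by
  refine ((injective_two_mul_add d.natAbs).hasSum_iff fun n hn => ?_).1 ?_
  · rw [← besselSeries_natAbs, coeff_besselSeries_of_notMem_range hn, zero_mul]
  · simp only [Function.comp_def, coeff_besselSeries_mul_pow]
    exact (summable_besselI d t).of_norm.hasSum

lemma hasSum_coeff_besselDetPlus (k : ℕ) (t : ℝ) :
    HasSum (fun n => coeff n (besselDetPlus k) * t ^ n)
      (Matrix.of fun i j : Fin k => besselI ((i : ℕ) - (j : ℕ) : ℤ) t +
        besselI ((i : ℕ) + (j : ℕ) : ℤ) t).det := by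
  refine hasSum_coeff_det (fun i j => ?_) fun i j => ?_
  · exact add_mem (besselSeries_mem_absSummableAt _ t) (besselSeries_mem_absSummableAt _ t)
  · simpa only [Matrix.of_apply, map_add, add_mul] using
      (hasSum_coeff_besselSeries _ t).add (hasSum_coeff_besselSeries _ t)

lemma hasSum_coeff_besselDetMinus (k : ℕ) (t : ℝ) :
    HasSum (fun n => coeff n (besselDetMinus k) * t ^ n)
      (Matrix.of fun i j : Fin k => besselI ((i : ℕ) - (j : ℕ) : ℤ) t -
        besselI ((i : ℕ) + (j : ℕ) + 2 : ℤ) t).det := by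
  refine hasSum_coeff_det (fun i j => ?_) fun i j => ?_
  · exact sub_mem (besselSeries_mem_absSummableAt _ t) (besselSeries_mem_absSummableAt _ t)
  · simpa only [Matrix.of_apply, map_sub, sub_mul] using
      (hasSum_coeff_besselSeries _ t).sub (hasSum_coeff_besselSeries _ t)

lemma coeff_besselDetPlus_add_besselDetMinus (k n : ℕ) :
    1 / 2 * (1 / 2 * coeff n (besselDetPlus (k + 1)) + coeff n (besselDetMinus k)) =
      evenWalk (2 * (k + 1)) n / n.factorial := by
  rw [eq_div_iff (Nat.cast_ne_zero.2 n.factorial_ne_zero)]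
  linear_combination (1 / 4) * factorial_mul_coeff_besselDetPlus k n +
    (1 / 2) * factorial_mul_coeff_besselDetMinus k n

lemma hasSum_evenWalk (k : ℕ) (t : ℝ) :
    HasSum (fun n => evenWalk (2 * (k + 1)) (2 * n) * t ^ (2 * n) / (2 * n).factorial)
      (1 / 2 * (1 / 2 * (Matrix.of fun i j : Fin (k + 1) =>
            besselI ((i : ℕ) - (j : ℕ) : ℤ) t + besselI ((i : ℕ) + (j : ℕ) : ℤ) t).det +
          (Matrix.of fun i j : Fin k => besselI ((i : ℕ) - (j : ℕ) : ℤ) t -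
            besselI ((i : ℕ) + (j : ℕ) + 2 : ℤ) t).det)) := by
  have hsum := (((hasSum_coeff_besselDetPlus (k + 1) t).mul_left (1 / 2)).add
    (hasSum_coeff_besselDetMinus k t)).mul_left (1 / 2)
  simp only [← mul_assoc, ← add_mul] at hsum
  simp only [coeff_besselDetPlus_add_besselDetMinus] at hsum
  rw [← (injective_two_mul_add 0).hasSum_iff] at hsum
  · simpa only [Function.comp_def, add_zero, div_mul_eq_mul_div] using hsum
  · intro n hn
    have hodd : Odd n := Nat.not_even_iff_odd.1 fun ⟨m, hm⟩ => hn ⟨m, by simp only; omega⟩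
    rw [evenWalk_of_odd _ hodd, zero_div, zero_mul]

end Evaluation

section LocalRule

/-- The local rule of growth diagrams for the Robinson–Schensted–Knuth correspondence, on
sequences of row lengths of partitions: it sends the three corners `κ ⊆ μ, ν` of a cell with
entry `a` to the fourth one. -/
def localRule (κ μ ν : ℕ → ℕ) (a : ℕ) : ℕ → ℕ
  | 0 => max (μ 0) (ν 0) + a
  | k + 1 => max (μ (k + 1)) (ν (k + 1)) + min (μ k) (ν k) - κ k

/-- The inverse of the local rule: it recovers the corner `κ` from the other three corners. -/
def localRuleInv (μ ν ρ : ℕ → ℕ) (k : ℕ) : ℕ :=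
  max (μ (k + 1)) (ν (k + 1)) + min (μ k) (ν k) - ρ (k + 1)

/-- The sequences of row lengths `κ` and `μ` interlace, that is, `μ` arises from `κ` by adding a
horizontal strip. -/
def Interlace (κ μ : ℕ → ℕ) : Prop := ∀ k, μ (k + 1) ≤ κ k ∧ κ k ≤ μ k

variable {κ μ ν ρ : ℕ → ℕ}

lemma interlace_zero : Interlace 0 0 := fun _ => ⟨le_rfl, le_rfl⟩

lemma Interlace.le (h : Interlace κ μ) : κ ≤ μ := fun k => (h k).2

lemma Interlace.antitone (h : Interlace κ μ) : Antitone κ :=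
  antitone_nat_of_succ_le fun k => (h.le (k + 1)).trans (h k).1

lemma interlace_add_single {r : ℕ} (hκ : Antitone κ) (h : Antitone (κ + Pi.single r 1)) :
    Interlace κ (κ + Pi.single r 1) := by
  intro k
  have hk := hκ k.le_succ
  have hk' := h k.le_succ
  simp only [Pi.add_apply, Pi.single_apply, Nat.succ_eq_add_one] at *
  refine ⟨?_, by omega⟩
  split_ifs at * <;> omega

lemma localRule_succ (κ μ ν : ℕ → ℕ) (a k : ℕ) : localRule κ μ ν a (k + 1) =
    max (μ (k + 1)) (ν (k + 1)) + min (μ k) (ν k) - κ k := rfl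

lemma localRule_comm (κ μ ν : ℕ → ℕ) (a : ℕ) : localRule κ μ ν a = localRule κ ν μ a := by
  funext k
  cases k <;> simp only [localRule, max_comm, min_comm]

lemma localRuleInv_comm (μ ν ρ : ℕ → ℕ) : localRuleInv μ ν ρ = localRuleInv ν μ ρ := by
  funext k
  simp only [localRuleInv, max_comm, min_comm]

lemma Interlace.localRule (hμ : Interlace κ μ) (hν : Interlace κ ν) (a : ℕ) :
    Interlace μ (localRule κ μ ν a) := by
  intro k
  have := hμ k
  have := hν k
  cases k with
  | zero => simp only [_root_.localRule]; omega
  | succ k =>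
    have := hμ k
    have := hν k
    simp only [_root_.localRule]; omega

lemma Interlace.localRuleInv (hμ : Interlace μ ρ) (hν : Interlace ν ρ) :
    Interlace (localRuleInv μ ν ρ) μ := by
  intro k
  have := hμ k
  have := hν k
  have := hμ (k + 1)
  have := hν (k + 1)
  simp only [_root_.localRuleInv]; omega

lemma localRuleInv_localRule (hμ : Interlace κ μ) (hν : Interlace κ ν) (a : ℕ) :
    localRuleInv μ ν (localRule κ μ ν a) = κ := by
  funext k
  have := hμ k
  have := hν k
  simp only [localRuleInv, localRule]; omega

lemma localRule_localRuleInv (hμ : Interlace μ ρ) (hν : Interlace ν ρ) :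
    localRule (localRuleInv μ ν ρ) μ ν (ρ 0 - max (μ 0) (ν 0)) = ρ := by
  funext k
  cases k with
  | zero =>
    have := hμ 0
    have := hν 0
    simp only [localRule]; omega
  | succ k =>
    have := hμ k
    have := hν k
    have := hμ (k + 1)
    have := hν (k + 1)
    simp only [localRule, localRuleInv]; omega

lemma sum_localRule (hμ : Interlace κ μ) (hν : Interlace κ ν) (a M : ℕ) :
    ∑ k ∈ range (M + 1), localRule κ μ ν a k + ∑ k ∈ range M, κ k + min (μ M) (ν M) =
      ∑ k ∈ range (M + 1), μ k + ∑ k ∈ range (M + 1), ν k + a := by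
  induction M with
  | zero => simp only [localRule, zero_add, range_one, sum_singleton, range_zero, sum_empty]; omega
  | succ M ih =>
    rw [sum_range_succ _ (M + 1), sum_range_succ κ, sum_range_succ μ (M + 1),
      sum_range_succ ν (M + 1), localRule_succ]
    have := hμ M
    have := hν M
    omega

lemma sum_even_sub_odd_localRule (h : Interlace κ μ) (a M : ℕ) :
    ∑ k ∈ range M, ((localRule κ μ μ a (2 * k) : ℤ) - localRule κ μ μ a (2 * k + 1)) =
      ∑ k ∈ range M, ((κ (2 * k) : ℤ) - κ (2 * k + 1)) + a -
        (localRule κ μ μ a (2 * M) - μ (2 * M)) := by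
  induction M with
  | zero => simp [localRule]
  | succ M ih =>
    rw [sum_range_succ, sum_range_succ, ih, show 2 * (M + 1) = 2 * M + 1 + 1 from rfl,
      localRule_succ, localRule_succ, max_self, max_self, min_self, min_self]
    have := h (2 * M)
    have := h (2 * M + 1)
    omega

lemma eq_of_sum_even_sub_odd_eq_zero {f : ℕ → ℕ} (hf : Antitone f) {M : ℕ}
    (hM : ∀ k, 2 * M ≤ k → f k = 0)
    (h : ∑ k ∈ range M, ((f (2 * k) : ℤ) - f (2 * k + 1)) = 0) (k : ℕ) :
    f (2 * k) = f (2 * k + 1) := by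
  have hnonneg (k : ℕ) : 0 ≤ (f (2 * k) : ℤ) - f (2 * k + 1) :=
    sub_nonneg.2 (Nat.cast_le.2 (hf (Nat.le_succ _)))
  rcases lt_or_ge k M with hk | hk
  · have := (sum_eq_zero_iff_of_nonneg fun k _ => hnonneg k).1 h k (mem_range.2 hk)
    omega
  · rw [hM _ (by omega), hM _ (by omega)]

end LocalRule

section Growth

/-- The growth diagram of the array `A`: the partition at `(i, j)`, given by its row lengths, is
the shape of the restriction of `A` to `[0, i) × [0, j)` under the Robinson–Schensted–Knuth
correspondence. -/
def growth (A : ℕ → ℕ → ℕ) : ℕ → ℕ → ℕ → ℕ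
  | 0, _ => 0
  | _ + 1, 0 => 0
  | i + 1, j + 1 => localRule (growth A i j) (growth A i (j + 1)) (growth A (i + 1) j) (A i j)

variable (A : ℕ → ℕ → ℕ)

lemma growth_zero_left (j : ℕ) : growth A 0 j = 0 := by rw [growth]

lemma growth_zero_right (i : ℕ) : growth A i 0 = 0 := by cases i <;> rw [growth]

lemma growth_succ_succ (i j : ℕ) : growth A (i + 1) (j + 1) =
    localRule (growth A i j) (growth A i (j + 1)) (growth A (i + 1) j) (A i j) := by rw [growth]

lemma growth_succ_succ_zero (i j : ℕ) : growth A (i + 1) (j + 1) 0 =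
    max (growth A i (j + 1) 0) (growth A (i + 1) j 0) + A i j := by rw [growth_succ_succ, localRule]

lemma interlace_growth_succ_left_of_right {i : ℕ}
    (h : ∀ j, Interlace (growth A i j) (growth A i (j + 1))) (j : ℕ) :
    Interlace (growth A i j) (growth A (i + 1) j) := by
  induction j with
  | zero => simpa only [growth_zero_right] using interlace_zero
  | succ j ih =>
    rw [growth_succ_succ]
    exact (h j).localRule ih _

lemma interlace_growth_succ_right (i j : ℕ) :
    Interlace (growth A i j) (growth A i (j + 1)) := by
  induction i generalizing j with
  | zero => simpa only [growth_zero_left] using interlace_zero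
  | succ i ih =>
    rw [growth_succ_succ, localRule_comm]
    exact (interlace_growth_succ_left_of_right A ih j).localRule (ih j) _

lemma interlace_growth_succ_left (i j : ℕ) : Interlace (growth A i j) (growth A (i + 1) j) :=
  interlace_growth_succ_left_of_right A (interlace_growth_succ_right A i) j

lemma antitone_growth (i j : ℕ) : Antitone (growth A i j) :=
  (interlace_growth_succ_left A i j).antitone

lemma growth_mono {i i' j j' : ℕ} (hi : i ≤ i') (hj : j ≤ j') : growth A i j ≤ growth A i' j' :=
  (monotone_nat_of_le_succ (f := fun i => growth A i j)
    (fun i => (interlace_growth_succ_left A i j).le) hi).trans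
  (monotone_nat_of_le_succ (f := growth A i') (fun j => (interlace_growth_succ_right A i' j).le) hj)

lemma growth_apply_eq_zero {i k : ℕ} (h : i ≤ k) (j : ℕ) : growth A i j k = 0 := by
  induction i generalizing k with
  | zero => rw [growth_zero_left, Pi.zero_apply]
  | succ i ih =>
    obtain ⟨k, rfl⟩ := Nat.exists_eq_add_of_le' (i.succ_pos.trans_le h)
    exact Nat.le_zero.1 ((interlace_growth_succ_left A i j k).1.trans_eq (ih (by omega)))

lemma sum_growth_succ {i M : ℕ} (h : i < M) (j : ℕ) :
    ∑ k ∈ range M, growth A (i + 1) j k = ∑ k ∈ range M, growth A i j k + ∑ q ∈ range j, A i q := by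
  induction j with
  | zero => simp [growth_zero_right]
  | succ j ih =>
    have hsum := sum_localRule (interlace_growth_succ_right A i j)
      (interlace_growth_succ_left A i j) (A i j) M
    rw [← growth_succ_succ, sum_range_succ, sum_range_succ (growth A i (j + 1)),
      sum_range_succ (growth A (i + 1) j), growth_apply_eq_zero A h (j + 1),
      growth_apply_eq_zero A h j, growth_apply_eq_zero A h.le (j + 1)] at hsum
    rw [sum_range_succ (A i)]
    omega

variable {A}

lemma growth_swap (hA : ∀ i j, A i j = A j i) (i j : ℕ) : growth A i j = growth A j i := by
  induction i generalizing j with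
  | zero => rw [growth_zero_left, growth_zero_right]
  | succ i ihi =>
    induction j with
    | zero => rw [growth_zero_left, growth_zero_right]
    | succ j ihj => rw [growth_succ_succ, growth_succ_succ, ihi, ihi, ihj, hA, localRule_comm]

/-- The left side is the number of columns of odd length, which by a theorem of Schützenberger is
the trace of a symmetric array. -/
lemma sum_even_sub_odd_growth (hA : ∀ i j, A i j = A j i) {M i : ℕ} (h : i ≤ 2 * M) :
    ∑ k ∈ range M, ((growth A i i (2 * k) : ℤ) - growth A i i (2 * k + 1)) =
      ∑ p ∈ range i, (A p p : ℤ) := by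
  induction i with
  | zero => simp [growth_zero_left]
  | succ i ih =>
    have hsucc : growth A (i + 1) (i + 1) =
        localRule (growth A i i) (growth A i (i + 1)) (growth A i (i + 1)) (A i i) := by
      rw [growth_succ_succ, growth_swap hA (i + 1) i]
    rw [hsucc, sum_even_sub_odd_localRule (interlace_growth_succ_right A i i), ← hsucc,
      ih (by omega), growth_apply_eq_zero A h, growth_apply_eq_zero A (i.le_succ.trans h),
      sum_range_succ]
    simp

lemma eq_of_growth_eq {B : ℕ → ℕ → ℕ} {N : ℕ}
    (h : ∀ i ≤ N, ∀ j ≤ N, growth A i j = growth B i j) {i j : ℕ} (hi : i < N) (hj : j < N) :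
    A i j = B i j := by
  have hij := congrFun (h (i + 1) hi (j + 1) hj) 0
  rw [growth_succ_succ_zero, growth_succ_succ_zero, h i hi.le (j + 1) hj,
    h (i + 1) hi j hj.le] at hij
  omega

end Growth

section InverseGrowth

/-- The table obtained by the inverse local rule from the values `c 0, …, c N` on the far sides of
the square `[0, N] × [0, N]`; positions are counted from the corner `(N, N)`. -/
def invGrowth (N : ℕ) (c : ℕ → ℕ → ℕ) : ℕ → ℕ → ℕ → ℕ
  | 0, q => c (N - q)
  | p + 1, 0 => c (N - (p + 1))
  | p + 1, q + 1 =>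
    localRuleInv (invGrowth N c p (q + 1)) (invGrowth N c (p + 1) q) (invGrowth N c p q)

/-- The array whose growth diagram takes the values `c 0, …, c N` on the far sides of the square
`[0, N] × [0, N]`. -/
def invGrowthArray (N : ℕ) (c : ℕ → ℕ → ℕ) (i j : ℕ) : ℕ :=
  if i < N ∧ j < N then
    invGrowth N c (N - (i + 1)) (N - (j + 1)) 0 -
      max (invGrowth N c (N - i) (N - (j + 1)) 0) (invGrowth N c (N - (i + 1)) (N - j) 0)
  else 0

variable (N : ℕ) (c : ℕ → ℕ → ℕ)

lemma invGrowth_zero_left (q : ℕ) : invGrowth N c 0 q = c (N - q) := by rw [invGrowth]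

lemma invGrowth_zero_right (p : ℕ) : invGrowth N c p 0 = c (N - p) := by cases p <;> rw [invGrowth]

lemma invGrowth_succ_succ (p q : ℕ) : invGrowth N c (p + 1) (q + 1) =
    localRuleInv (invGrowth N c p (q + 1)) (invGrowth N c (p + 1) q) (invGrowth N c p q) := by
  rw [invGrowth]

lemma invGrowth_swap (p q : ℕ) : invGrowth N c p q = invGrowth N c q p := by
  induction p generalizing q with
  | zero => rw [invGrowth_zero_left, invGrowth_zero_right]
  | succ p ihp =>
    induction q with
    | zero => rw [invGrowth_zero_left, invGrowth_zero_right]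
    | succ q ihq => rw [invGrowth_succ_succ, invGrowth_succ_succ, ihp, ihp, ihq, localRuleInv_comm]

lemma invGrowthArray_swap (i j : ℕ) : invGrowthArray N c i j = invGrowthArray N c j i := by
  unfold invGrowthArray
  rw [invGrowth_swap N c (N - (i + 1)) (N - (j + 1)), invGrowth_swap N c (N - i),
    invGrowth_swap N c (N - (i + 1)) (N - j), max_comm]
  simp only [and_comm]

variable {N c}

lemma invGrowth_of_eq_growth {A : ℕ → ℕ → ℕ} (hA : ∀ i j, A i j = A j i)
    (hc : ∀ j ≤ N, c j = growth A j N) {p q : ℕ} (hp : p ≤ N) (hq : q ≤ N) :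
    invGrowth N c p q = growth A (N - p) (N - q) := by
  induction p generalizing q with
  | zero => rw [invGrowth_zero_left, hc _ (by omega), growth_swap hA, Nat.sub_zero]
  | succ p ihp =>
    induction q with
    | zero => rw [invGrowth_zero_right, hc _ (by omega), Nat.sub_zero]
    | succ q ihq =>
      rw [invGrowth_succ_succ, ihp (by omega) hq, ihp (by omega) (by omega), ihq (by omega),
        show N - p = N - (p + 1) + 1 by omega, show N - q = N - (q + 1) + 1 by omega,
        growth_succ_succ, localRuleInv_comm, localRuleInv_localRule]
      · exact interlace_growth_succ_right A _ _
      · exact interlace_growth_succ_left A _ _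

variable (hzero : c 0 = 0) (hc : ∀ j < N, Interlace (c j) (c (j + 1)))
include hzero hc

lemma interlace_sub (q : ℕ) : Interlace (c (N - (q + 1))) (c (N - q)) := by
  rcases lt_or_ge q N with h | h
  · rw [show N - q = N - (q + 1) + 1 by omega]
    exact hc _ (by omega)
  · rw [Nat.sub_eq_zero_of_le h, Nat.sub_eq_zero_of_le (h.trans q.le_succ), hzero]
    exact interlace_zero

lemma interlace_invGrowth (p q : ℕ) :
    Interlace (invGrowth N c p (q + 1)) (invGrowth N c p q) := by
  induction p generalizing q with
  | zero =>
    rw [invGrowth_zero_left, invGrowth_zero_left]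
    exact interlace_sub hzero hc q
  | succ p ih =>
    have hleft (q : ℕ) : Interlace (invGrowth N c (p + 1) q) (invGrowth N c p q) := by
      induction q with
      | zero =>
        rw [invGrowth_zero_right, invGrowth_zero_right]
        exact interlace_sub hzero hc p
      | succ q ihq =>
        rw [invGrowth_succ_succ]
        exact (ih q).localRuleInv ihq
    rw [invGrowth_succ_succ, localRuleInv_comm]
    exact (hleft q).localRuleInv (ih q)

lemma invGrowth_eq_zero (q : ℕ) : invGrowth N c N q = 0 := by
  induction q with
  | zero => rw [invGrowth_zero_right, Nat.sub_self, hzero]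
  | succ q ih => exact le_antisymm ((interlace_invGrowth hzero hc N q).le.trans_eq ih) zero_le

lemma growth_invGrowthArray {i j : ℕ} (hi : i ≤ N) (hj : j ≤ N) :
    growth (invGrowthArray N c) i j = invGrowth N c (N - i) (N - j) := by
  induction i generalizing j with
  | zero => rw [growth_zero_left, Nat.sub_zero, invGrowth_eq_zero hzero hc]
  | succ i ihi =>
    induction j with
    | zero => rw [growth_zero_right, Nat.sub_zero, invGrowth_swap, invGrowth_eq_zero hzero hc]
    | succ j ihj =>
      rw [growth_succ_succ, ihi (by omega) hj, ihi (by omega) (by omega), ihj (by omega),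
        invGrowthArray, if_pos ⟨hi, hj⟩]
      generalize hp : N - (i + 1) = p
      generalize hq : N - (j + 1) = q
      rw [show N - i = p + 1 by omega, show N - j = q + 1 by omega, invGrowth_succ_succ,
        localRuleInv_comm, localRule_localRuleInv]
      · rw [invGrowth_swap, invGrowth_swap N c p q]
        exact interlace_invGrowth hzero hc q p
      · exact interlace_invGrowth hzero hc p q

lemma growth_invGrowthArray_right {i : ℕ} (hi : i ≤ N) :
    growth (invGrowthArray N c) i N = c i := by
  rw [growth_invGrowthArray hzero hc hi le_rfl, Nat.sub_self, invGrowth_zero_right,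
    Nat.sub_sub_self hi]

end InverseGrowth

section PermTable

variable {N : ℕ}

/-- The permutation matrix of `π`, indexed by `ℕ` and extended by zero. -/
def permTable (π : Equiv.Perm (Fin N)) (i j : ℕ) : ℕ :=
  if ∃ a : Fin N, (a : ℕ) = i ∧ (π a : ℕ) = j then 1 else 0

variable (π : Equiv.Perm (Fin N))

lemma permTable_apply_self (a : Fin N) : permTable π a (π a) = 1 := if_pos ⟨a, rfl, rfl⟩

variable {π}

lemma permTable_ne_zero {i j : ℕ} :
    permTable π i j ≠ 0 ↔ ∃ a : Fin N, (a : ℕ) = i ∧ (π a : ℕ) = j := by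
  simp [permTable]

lemma permTable_swap (hπ : π * π = 1) (i j : ℕ) : permTable π i j = permTable π j i := by
  have hinv (a : Fin N) : π (π a) = a := congrArg (· a) hπ
  refine if_congr ⟨?_, ?_⟩ rfl rfl
  all_goals
    rintro ⟨a, rfl, rfl⟩
    exact ⟨π a, rfl, by rw [hinv]⟩

lemma sum_permTable (a : Fin N) : ∑ q ∈ range N, permTable π a q = 1 := by
  rw [sum_eq_single_of_mem _ (mem_range.2 (π a).2), permTable_apply_self]
  intro q _ hq
  by_contra hne
  obtain ⟨b, hb, rfl⟩ := permTable_ne_zero.1 hne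
  exact hq (by rw [Fin.ext hb])

lemma sum_diag_permTable_eq_zero_iff :
    ∑ p ∈ range N, (permTable π p p : ℤ) = 0 ↔ ∀ x, π x ≠ x := by
  rw [sum_eq_zero_iff_of_nonneg fun _ _ => by positivity]
  constructor
  · intro h x hx
    have hone := permTable_apply_self π x
    rw [hx, Nat.cast_eq_zero.1 (h x (mem_range.2 x.2))] at hone
    exact zero_ne_one hone
  · intro h p _
    by_contra hne
    obtain ⟨a, rfl, ha⟩ := permTable_ne_zero.1 (Nat.cast_ne_zero.1 hne)
    exact h a (Fin.ext ha)

lemma eq_of_permTable_eq {σ : Equiv.Perm (Fin N)}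
    (h : ∀ i < N, ∀ j < N, permTable π i j = permTable σ i j) : π = σ := by
  ext a
  have hne : permTable σ a (π a) ≠ 0 := by
    rw [← h a a.2 _ (π a).2, permTable_apply_self]
    exact one_ne_zero
  obtain ⟨b, hba, hb⟩ := permTable_ne_zero.1 hne
  rw [← hb, Fin.ext hba]

lemma exists_eq_single_of_sum_eq_one {ι : Type*} [DecidableEq ι] {f : ι → ℕ} {s : Finset ι}
    (hs : ∀ i ∉ s, f i = 0) (h : ∑ i ∈ s, f i = 1) : ∃ i ∈ s, f = Pi.single i 1 := by
  obtain ⟨i, hi, hne⟩ := exists_ne_zero_of_sum_ne_zero (h.trans_ne one_ne_zero)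
  rw [← add_sum_erase _ _ hi] at h
  have hrest : ∀ k ∈ s.erase i, f k = 0 := sum_eq_zero_iff.1 (by omega)
  refine ⟨i, hi, funext fun k => ?_⟩
  rcases eq_or_ne k i with rfl | hk
  · rw [Pi.single_eq_same]
    omega
  · rw [Pi.single_eq_of_ne hk]
    by_cases hks : k ∈ s
    · exact hrest k (mem_erase.2 ⟨hk, hks⟩)
    · exact hs k hks

lemma exists_permTable_eq {A : ℕ → ℕ → ℕ} (hA : ∀ i j, A i j = A j i)
    (hrow : ∀ i < N, ∑ q ∈ range N, A i q = 1) (hout : ∀ i j, ¬(i < N ∧ j < N) → A i j = 0) :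
    ∃ π : Equiv.Perm (Fin N), π * π = 1 ∧ permTable π = A := by
  have hsingle (i : Fin N) : ∃ j : Fin N, A i = Pi.single (j : ℕ) 1 := by
    obtain ⟨j, hj, h⟩ := exists_eq_single_of_sum_eq_one
      (fun q hq => hout i q fun h => hq (mem_range.2 h.2)) (hrow i i.2)
    exact ⟨⟨j, mem_range.1 hj⟩, h⟩
  choose f hf using hsingle
  have hne (i j : Fin N) : A i j ≠ 0 ↔ f i = j := by
    simp [hf, Pi.single_apply, Fin.ext_iff, eq_comm]
  have hinv : Function.Involutive f := fun i => by
    rw [← hne, hA, hne]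
  refine ⟨hinv.toPerm, Equiv.ext hinv, funext fun i => funext fun j => ?_⟩
  by_cases hi : i < N
  · rw [show A i j = _ from congrFun (hf ⟨i, hi⟩) j, Pi.single_apply]
    refine if_congr ⟨?_, fun h => ⟨⟨i, hi⟩, rfl, h.symm⟩⟩ rfl rfl
    rintro ⟨a, rfl, rfl⟩
    rfl
  · rw [hout i j fun h => hi h.1]
    by_contra hne
    obtain ⟨a, rfl, -⟩ := permTable_ne_zero.1 hne
    exact hi a.2

end PermTable

section IncreasingSubsequences

variable {N : ℕ}

/-- `S` is the set of positions of an increasing subsequence of `π` all of whose points lie in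
`[0, i) × [0, j)`. -/
def IsIncreasingBelow (π : Equiv.Perm (Fin N)) (i j : ℕ) (S : Finset (Fin N)) : Prop :=
  (∀ a ∈ S, (a : ℕ) < i ∧ (π a : ℕ) < j) ∧ StrictMonoOn π S

variable {π : Equiv.Perm (Fin N)} {i j : ℕ} {S : Finset (Fin N)}

lemma isIncreasingBelow_empty (π : Equiv.Perm (Fin N)) (i j : ℕ) : IsIncreasingBelow π i j ∅ := by
  simp [IsIncreasingBelow, StrictMonoOn]

lemma IsIncreasingBelow.mono (h : IsIncreasingBelow π i j S) {i' j' : ℕ} (hi : i ≤ i')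
    (hj : j ≤ j') : IsIncreasingBelow π i' j' S :=
  ⟨fun a ha => ⟨(h.1 a ha).1.trans_le hi, (h.1 a ha).2.trans_le hj⟩, h.2⟩

lemma IsIncreasingBelow.insert_point {a : Fin N} (h : IsIncreasingBelow π a (π a) S) :
    IsIncreasingBelow π (a + 1) (π a + 1) (insert a S) := by
  constructor
  · rw [forall_mem_insert]
    exact ⟨⟨Nat.lt_succ_self _, Nat.lt_succ_self _⟩, (h.mono (Nat.le_succ _) (Nat.le_succ _)).1⟩
  · rw [coe_insert, strictMonoOn_insert_iff_of_forall_le fun b hb => (h.1 b hb).1.le]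
    exact ⟨fun b hb _ => (h.1 b hb).2, h.2⟩

lemma IsIncreasingBelow.notMem {a : Fin N} (h : IsIncreasingBelow π a j S) : a ∉ S := fun ha =>
  lt_irrefl _ (h.1 a ha).1

lemma IsIncreasingBelow.of_succ_right {a : Fin N} (h : IsIncreasingBelow π a (π a + 1) S) :
    IsIncreasingBelow π a (π a) S := by
  refine ⟨fun b hb => ⟨(h.1 b hb).1, (Nat.lt_succ_iff.1 (h.1 b hb).2).lt_of_ne fun hba => ?_⟩, h.2⟩
  exact (h.1 b hb).1.ne (congrArg Fin.val (π.injective (Fin.ext hba)))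

lemma IsIncreasingBelow.of_succ_left {a : Fin N} (h : IsIncreasingBelow π (a + 1) (π a) S) :
    IsIncreasingBelow π a (π a) S := by
  refine ⟨fun b hb => ⟨(Nat.lt_succ_iff.1 (h.1 b hb).1).lt_of_ne fun hba => ?_, (h.1 b hb).2⟩, h.2⟩
  exact (h.1 b hb).2.ne (by rw [Fin.ext hba])

lemma IsIncreasingBelow.card_le_growth (h : IsIncreasingBelow π i j S) :
    #S ≤ growth (permTable π) i j 0 := by
  induction S using Finset.induction_on_max generalizing i j with
  | empty => exact Nat.zero_le _
  | insert a S ha ih =>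
    have hbelow : IsIncreasingBelow π a (π a) S :=
      ⟨fun b hb => ⟨ha b hb, h.2 (mem_coe.2 (mem_insert_of_mem hb))
        (mem_coe.2 (mem_insert_self a S)) (ha b hb)⟩,
        h.2.mono (coe_subset.2 (subset_insert a S))⟩
    calc #(insert a S) = #S + 1 := card_insert_of_notMem hbelow.notMem
      _ ≤ growth (permTable π) (a + 1) (π a) 0 + 1 :=
        Nat.add_le_add_right (ih (hbelow.mono (Nat.le_succ _) le_rfl)) 1
      _ ≤ growth (permTable π) (a + 1) (π a + 1) 0 := by
        rw [growth_succ_succ_zero, permTable_apply_self]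
        exact Nat.add_le_add_right (le_max_right _ _) 1
      _ ≤ growth (permTable π) i j 0 :=
        growth_mono _ (h.1 a (mem_insert_self a S)).1 (h.1 a (mem_insert_self a S)).2 0

lemma exists_isIncreasingBelow_card_eq (π : Equiv.Perm (Fin N)) (i j : ℕ) :
    ∃ S, IsIncreasingBelow π i j S ∧ #S = growth (permTable π) i j 0 := by
  induction i generalizing j with
  | zero => exact ⟨∅, isIncreasingBelow_empty π 0 j, by rw [growth_zero_left]; rfl⟩
  | succ i ihi =>
    induction j with
    | zero => exact ⟨∅, isIncreasingBelow_empty π _ 0, by rw [growth_zero_right]; rfl⟩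
    | succ j ihj =>
      obtain ⟨S, hS, hcard⟩ : ∃ S,
          (IsIncreasingBelow π i (j + 1) S ∨ IsIncreasingBelow π (i + 1) j S) ∧
            #S = max (growth (permTable π) i (j + 1) 0) (growth (permTable π) (i + 1) j 0) := by
        obtain ⟨S, hS, hcardS⟩ := ihi (j + 1)
        obtain ⟨T, hT, hcardT⟩ := ihj
        rcases max_choice (growth (permTable π) i (j + 1) 0) (growth (permTable π) (i + 1) j 0)
          with hmax | hmax
        · exact ⟨S, Or.inl hS, hcardS.trans hmax.symm⟩
        · exact ⟨T, Or.inr hT, hcardT.trans hmax.symm⟩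
      rw [growth_succ_succ_zero, ← hcard]
      by_cases hij : permTable π i j = 0
      · exact ⟨S, hS.elim (fun h => h.mono (Nat.le_succ _) le_rfl)
          fun h => h.mono le_rfl (Nat.le_succ _), by rw [hij, add_zero]⟩
      · obtain ⟨a, rfl, rfl⟩ := permTable_ne_zero.1 hij
        have hbelow : IsIncreasingBelow π a (π a) S :=
          hS.elim IsIncreasingBelow.of_succ_right IsIncreasingBelow.of_succ_left
        exact ⟨insert a S, hbelow.insert_point, by
          rw [card_insert_of_notMem hbelow.notMem, permTable_apply_self]⟩

lemma lisLE_iff_growth_le (π : Equiv.Perm (Fin N)) (m : ℕ) :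
    lisLE π m ↔ growth (permTable π) N N 0 ≤ m := by
  constructor
  · intro h
    obtain ⟨S, hS, hcard⟩ := exists_isIncreasingBelow_card_eq π N N
    rw [← hcard]
    exact h _ (S.orderEmbOfFin rfl) (S.orderEmbOfFin rfl).strictMono fun a b hab =>
      hS.2 (S.orderEmbOfFin_mem rfl a) (S.orderEmbOfFin_mem rfl b)
        ((S.orderEmbOfFin rfl).strictMono hab)
  · intro h k f hf hπf
    have hincr : IsIncreasingBelow π N N (univ.image f) := by
      refine ⟨fun a _ => ⟨a.2, (π a).2⟩, ?_⟩
      rw [coe_image, coe_univ, Set.image_univ]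
      rintro _ ⟨s, rfl⟩ _ ⟨t, rfl⟩ hst
      exact hπf (hf.lt_iff_lt.1 hst)
    calc k = #(univ.image f) := by
          rw [card_image_of_injective _ hf.injective, card_univ, Fintype.card_fin]
      _ ≤ m := hincr.card_le_growth.trans h

end IncreasingSubsequences

section EvenColumnChains

/-- The sequence `c` is a chain `c 0, …, c n` of partitions, given by their row lengths, that adds
one box at a time, starts at `κ`, and ends at a partition with rows of length at most `m` all of
whose columns have even length, that is, whose rows are equal in pairs. Beyond `n` the sequence is
required to be constant, so that it is determined by the chain. -/
structure EvenColumnChain (m n : ℕ) (κ : ℕ → ℕ) (c : ℕ → ℕ → ℕ) : Prop where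
  start : c 0 = κ
  step : ∀ j < n, ∃ r, c (j + 1) = c j + Pi.single r 1
  antitone : ∀ j ≤ n, Antitone (c j)
  stable : ∀ j, n ≤ j → c j = c n
  le : c n 0 ≤ m
  paired : ∀ i, c n (2 * i) = c n (2 * i + 1)

variable {m n : ℕ} {κ : ℕ → ℕ} {c : ℕ → ℕ → ℕ}

lemma EvenColumnChain.interlace (h : EvenColumnChain m n κ c) {j : ℕ} (hj : j < n) :
    Interlace (c j) (c (j + 1)) := by
  obtain ⟨r, hr⟩ := h.step j hj
  have hanti := h.antitone (j + 1) hj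
  rw [hr] at hanti ⊢
  exact interlace_add_single (h.antitone j hj.le) hanti

lemma EvenColumnChain.apply_zero_le (h : EvenColumnChain m n κ c) {j : ℕ} (hj : j ≤ n) :
    c j 0 ≤ m := by
  induction hj using Nat.decreasingInduction with
  | of_succ j hj ih => exact ((h.interlace hj).le 0).trans ih
  | self => exact h.le

lemma EvenColumnChain.tail (h : EvenColumnChain m (n + 1) κ c) :
    EvenColumnChain m n (c 1) fun j => c (j + 1) where
  start := rfl
  step j hj := h.step (j + 1) (Nat.succ_lt_succ hj)
  antitone j hj := h.antitone (j + 1) (Nat.succ_le_succ hj)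
  stable j hj := h.stable (j + 1) (Nat.succ_le_succ hj)
  le := h.le
  paired := h.paired

lemma EvenColumnChain.cons {r : ℕ} {κ' : ℕ → ℕ} (hκ : Antitone κ) (hr : κ' = κ + Pi.single r 1)
    (h : EvenColumnChain m n κ' c) :
    EvenColumnChain m (n + 1) κ fun j => Nat.casesOn j κ c where
  start := rfl
  step := by
    rintro (_ | j) hj
    · exact ⟨r, h.start.trans hr⟩
    · exact h.step j (Nat.lt_of_succ_lt_succ hj)
  antitone := by
    rintro (_ | j) hj
    · exact hκ
    · exact h.antitone j (Nat.le_of_succ_le_succ hj)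
  stable := by
    rintro (_ | j) hj
    · exact absurd hj (Nat.not_succ_le_zero n)
    · exact h.stable j (Nat.le_of_succ_le_succ hj)
  le := h.le
  paired := h.paired

lemma evenColumnChain_zero_iff :
    EvenColumnChain m 0 κ c ↔ c = (fun _ => κ) ∧ Antitone κ ∧ κ 0 ≤ m ∧
      ∀ i, κ (2 * i) = κ (2 * i + 1) := by
  constructor
  · rintro ⟨rfl, -, hanti, hstable, hle, hpaired⟩
    exact ⟨funext fun j => hstable j (Nat.zero_le j), hanti 0 le_rfl, hle, hpaired⟩
  · rintro ⟨rfl, hanti, hle, hpaired⟩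
    exact ⟨rfl, fun j hj => absurd hj (Nat.not_lt_zero j), fun _ _ => hanti, fun _ _ => rfl, hle,
      hpaired⟩

end EvenColumnChains

section BoundaryChain

lemma exists_eq_add_single {f g : ℕ → ℕ} {M : ℕ} (hfg : f ≤ g) (hg : ∀ k, M ≤ k → g k = 0)
    (h : ∑ k ∈ range M, g k = ∑ k ∈ range M, f k + 1) : ∃ r, g = f + Pi.single r 1 := by
  have hsum : ∑ k ∈ range M, (g - f) k = 1 := by
    rw [← Nat.add_right_inj (n := ∑ k ∈ range M, f k), ← h, ← sum_add_distrib]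
    exact sum_congr rfl fun k _ => Nat.add_sub_cancel' (hfg k)
  have hout (k : ℕ) (hk : k ∉ range M) : (g - f) k = 0 := by
    rw [Pi.sub_apply, hg k (not_lt.1 fun h => hk (mem_range.2 h)), Nat.zero_sub]
  obtain ⟨r, -, hr⟩ := exists_eq_single_of_sum_eq_one hout hsum
  exact ⟨r, by rw [← hr, add_tsub_cancel_of_le hfg]⟩

/-- The chain of partitions on the last column of the growth diagram of `π`. -/
def boundaryChain {N : ℕ} (π : Equiv.Perm (Fin N)) (j : ℕ) : ℕ → ℕ :=
  growth (permTable π) (min j N) N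

lemma boundaryChain_of_le {N : ℕ} (π : Equiv.Perm (Fin N)) {j : ℕ} (hj : j ≤ N) :
    boundaryChain π j = growth (permTable π) j N := by rw [boundaryChain, min_eq_left hj]

lemma boundaryChain_of_ge {N : ℕ} (π : Equiv.Perm (Fin N)) {j : ℕ} (hj : N ≤ j) :
    boundaryChain π j = growth (permTable π) N N := by rw [boundaryChain, min_eq_right hj]

lemma boundaryChain_injOn {N : ℕ} :
    Set.InjOn (boundaryChain (N := N)) {π | π * π = 1} := by
  intro π hπ σ hσ h
  refine eq_of_permTable_eq fun i hi j hj => eq_of_growth_eq (fun i hi j hj => ?_) hi hj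
  rw [← Nat.sub_sub_self hi, ← Nat.sub_sub_self hj,
    ← invGrowth_of_eq_growth (permTable_swap hπ) (fun _ => boundaryChain_of_le π)
      (N.sub_le i) (N.sub_le j),
    ← invGrowth_of_eq_growth (permTable_swap hσ) (fun _ => boundaryChain_of_le σ)
      (N.sub_le i) (N.sub_le j), h]

variable {m n : ℕ}

lemma evenColumnChain_boundaryChain {π : Equiv.Perm (Fin (2 * n))} (hπ : π * π = 1)
    (hfix : ∀ x, π x ≠ x) (hlis : lisLE π m) :
    EvenColumnChain m (2 * n) 0 (boundaryChain π) where
  start := by rw [boundaryChain_of_le π (Nat.zero_le _), growth_zero_left]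
  step j hj := by
    rw [boundaryChain_of_le π hj.le, boundaryChain_of_le π hj]
    refine exists_eq_add_single (interlace_growth_succ_left _ j _).le
      (fun k hk => growth_apply_eq_zero _ (hj.trans_le hk) _) ?_
    rw [sum_growth_succ _ hj, sum_permTable ⟨j, hj⟩]
  antitone _ _ := antitone_growth _ _ _
  stable j hj := by rw [boundaryChain_of_ge π hj, boundaryChain_of_ge π le_rfl]
  le := by
    rw [boundaryChain_of_ge π le_rfl]
    exact (lisLE_iff_growth_le π m).1 hlis
  paired := by
    rw [boundaryChain_of_ge π le_rfl]
    refine eq_of_sum_even_sub_odd_eq_zero (antitone_growth _ _ _)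
      (fun k hk => growth_apply_eq_zero _ hk _) ?_
    rw [sum_even_sub_odd_growth (permTable_swap hπ) le_rfl]
    exact sum_diag_permTable_eq_zero_iff.2 hfix

lemma EvenColumnChain.sum_invGrowthArray {N : ℕ} {c : ℕ → ℕ → ℕ} (hc : EvenColumnChain m N 0 c)
    {i : ℕ} (hi : i < N) : ∑ q ∈ range N, invGrowthArray N c i q = 1 := by
  have hgrowth {i : ℕ} (hi : i ≤ N) : growth (invGrowthArray N c) i N = c i :=
    growth_invGrowthArray_right hc.start (fun _ => hc.interlace) hi
  obtain ⟨r, hr⟩ := hc.step i hi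
  have hrN : r < N := by
    by_contra! hle
    have hzero := growth_apply_eq_zero (invGrowthArray N c) (Nat.succ_le_of_lt hi |>.trans hle) N
    rw [hgrowth hi, hr] at hzero
    simp at hzero
  have hsum := sum_growth_succ (invGrowthArray N c) hi N
  rw [hgrowth hi, hgrowth hi.le, hr] at hsum
  simp only [Pi.add_apply, sum_add_distrib, sum_pi_single', mem_range, if_pos hrN] at hsum
  omega

lemma EvenColumnChain.exists_boundaryChain_eq {c : ℕ → ℕ → ℕ}
    (hc : EvenColumnChain m (2 * n) 0 c) :
    ∃ π : Equiv.Perm (Fin (2 * n)), (π * π = 1 ∧ (∀ x, π x ≠ x) ∧ lisLE π m) ∧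
      boundaryChain π = c := by
  obtain ⟨π, hπ, htable⟩ := exists_permTable_eq (invGrowthArray_swap (2 * n) c)
    (fun i hi => hc.sum_invGrowthArray hi) fun i j h => if_neg h
  have hgrowth {i : ℕ} (hi : i ≤ 2 * n) : growth (permTable π) i (2 * n) = c i := by
    rw [htable, growth_invGrowthArray_right hc.start (fun _ => hc.interlace) hi]
  refine ⟨π, ⟨hπ, ?_, ?_⟩, funext fun j => ?_⟩
  · rw [← sum_diag_permTable_eq_zero_iff, ← sum_even_sub_odd_growth (permTable_swap hπ) le_rfl,
      hgrowth le_rfl]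
    exact sum_eq_zero fun k _ => by rw [hc.paired k, sub_self]
  · rw [lisLE_iff_growth_le, hgrowth le_rfl]
    exact hc.le
  · rcases le_total j (2 * n) with hj | hj
    · rw [boundaryChain_of_le π hj, hgrowth hj]
    · rw [boundaryChain_of_ge π hj, hgrowth le_rfl, hc.stable j hj]

lemma fpfInvCount_eq_card_evenColumnChain (n m : ℕ) :
    fpfInvCount n m = Nat.card {c // EvenColumnChain m (2 * n) 0 c} := by
  refine Nat.card_congr (Equiv.ofBijective
    (fun π => ⟨boundaryChain π.1, evenColumnChain_boundaryChain π.2.1 π.2.2.1 π.2.2.2⟩) ⟨?_, ?_⟩)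
  · rintro ⟨π, hπ⟩ ⟨σ, hσ⟩ h
    exact Subtype.ext (boundaryChain_injOn hπ.1 hσ.1 (congrArg Subtype.val h))
  · rintro ⟨c, hc⟩
    obtain ⟨π, hπ, h⟩ := hc.exists_boundaryChain_eq
    exact ⟨⟨π, hπ⟩, Subtype.ext h⟩

end BoundaryChain

section RowLengths

variable {m : ℕ}

lemma monotone_add_single_iff {x : Fin m → ℕ} (hx : Monotone x) {j : Fin m} :
    Monotone (x + Pi.single j 1) ↔ ∀ i, j < i → x j < x i := by
  constructor
  · intro h i hi
    have := h hi.le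
    simp only [Pi.add_apply, Pi.single_eq_same, Pi.single_eq_of_ne hi.ne', add_zero] at this
    omega
  · intro h a b hab
    simp only [Pi.add_apply, Pi.single_apply]
    have := hx hab
    split_ifs with ha hb
    · omega
    · have := h b (ha ▸ hab.lt_of_ne fun hab => hb (hab ▸ ha))
      rw [ha]
      omega
    · omega
    · omega

lemma eq_of_monotone_add_single {x : Fin m → ℕ} (hx : Monotone x) {i j : Fin m}
    (hi : Monotone (x + Pi.single i 1)) (hj : Monotone (x + Pi.single j 1)) (h : x i = x j) :
    i = j := by
  rw [monotone_add_single_iff hx] at hi hj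
  exact le_antisymm (not_lt.1 fun hji => (hj i hji).ne' h) (not_lt.1 fun hij => (hi j hij).ne h)

lemma exists_monotone_add_single {x : Fin m → ℕ} (hx : Monotone x) (i : Fin m) :
    ∃ j, Monotone (x + Pi.single j 1) ∧ x j = x i := by
  have hne : ({a | x a = x i} : Finset (Fin m)).Nonempty := ⟨i, by simp⟩
  obtain ⟨j, hj, hmax⟩ := exists_max_image _ id hne
  have hji : x j = x i := by simpa using hj
  refine ⟨j, (monotone_add_single_iff hx).2 fun a ha => (hx ha.le).lt_of_ne fun hja => ?_, hji⟩
  exact ha.not_ge (hmax a (by simp [← hja, hji]))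

/-- The row lengths of the partition with columns of lengths `x 0, …, x (m - 1)`, which may be
given in any order. -/
def rowLength (x : Fin m → ℕ) (r : ℕ) : ℕ := #{i | r < x i}

lemma rowLength_zero : rowLength (0 : Fin m → ℕ) = 0 := by
  funext r
  simp [rowLength]

lemma rowLength_antitone (x : Fin m → ℕ) : Antitone (rowLength x) := fun _ _ h =>
  card_le_card (monotone_filter_right _ fun _ _ => h.trans_lt)

lemma rowLength_le (x : Fin m → ℕ) (r : ℕ) : rowLength x r ≤ m :=
  (card_le_univ _).trans_eq (Fintype.card_fin m)

lemma rowLength_add_single (x : Fin m → ℕ) (j : Fin m) :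
    rowLength (x + Pi.single j 1) = rowLength x + Pi.single (x j) 1 := by
  funext r
  have hrest : ∑ i ∈ univ.erase j, (if r < (x + Pi.single j 1 : Fin m → ℕ) i then 1 else 0) =
      ∑ i ∈ univ.erase j, if r < x i then 1 else 0 :=
    sum_congr rfl fun i hi => by simp [(mem_erase.1 hi).1]
  simp only [Pi.add_apply, rowLength, card_filter] at hrest ⊢
  rw [← add_sum_erase _ _ (mem_univ j), ← add_sum_erase _ _ (mem_univ j), hrest,
    Pi.single_eq_same, Pi.single_apply]
  split_ifs <;> omega

lemma exists_apply_eq_of_antitone_rowLength_add_single {x : Fin m → ℕ} {r : ℕ}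
    (hr : Antitone (rowLength x + Pi.single r 1))
    (hm : (rowLength x + Pi.single r 1 : ℕ → ℕ) 0 ≤ m) :
    ∃ i, x i = r := by
  by_contra! hne
  cases r with
  | zero =>
    have hall : rowLength x 0 = m := by
      rw [rowLength, filter_true_of_mem fun i _ => Nat.pos_of_ne_zero (hne i), card_univ,
        Fintype.card_fin]
    rw [Pi.add_apply, hall, Pi.single_eq_same] at hm
    omega
  | succ r =>
    have hlt : rowLength x (r + 1) < rowLength x r := by
      simpa [Pi.single_apply] using hr r.le_succ
    refine hlt.ne (congrArg card (filter_congr fun i _ => ?_))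
    have := hne i
    omega

lemma forall_even_iff_rowLength_eq {x : Fin m → ℕ} :
    (∀ i, Even (x i)) ↔ ∀ i, rowLength x (2 * i) = rowLength x (2 * i + 1) := by
  constructor
  · intro h i
    refine congrArg card (filter_congr fun a _ => ?_)
    obtain ⟨b, hb⟩ := h a
    omega
  · intro h a
    by_contra hodd
    obtain ⟨b, hb⟩ := Nat.not_even_iff_odd.1 hodd
    have hsub : ({i | 2 * b + 1 < x i} : Finset (Fin m)) ⊆
        ({i | 2 * b < x i} : Finset (Fin m)) :=
      monotone_filter_right _ fun _ _ => (Nat.lt_succ_self _).trans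
    have hmem : a ∈ ({i | 2 * b < x i} : Finset (Fin m)) := by simp [hb]
    rw [← eq_of_subset_of_card_le hsub (h b).le] at hmem
    simp [hb] at hmem

end RowLengths

section CountingChains

variable {m n : ℕ}

/-- Prepends the partition with column lengths `x` to a chain that starts by adding a box to one of
the columns. -/
def consChain (x : Fin m → ℕ) (p : Σ j : {j : Fin m // Monotone (x + Pi.single j 1)},
    {c // EvenColumnChain m n (rowLength (x + Pi.single j.1 1)) c}) :
    {c // EvenColumnChain m (n + 1) (rowLength x) c} :=
  ⟨fun k => Nat.casesOn k (rowLength x) p.2.1,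
    p.2.2.cons (rowLength_antitone x) (rowLength_add_single x p.1.1)⟩

lemma consChain_injective {x : Fin m → ℕ} (hx : Monotone x) :
    Function.Injective (consChain (n := n) x) := by
  rintro ⟨⟨i, hi⟩, c, hc⟩ ⟨⟨j, hj⟩, d, hd⟩ h
  obtain rfl : c = d := funext fun k => congrFun (congrArg Subtype.val h) (k + 1)
  have hstart := hc.start.symm.trans hd.start
  rw [rowLength_add_single, rowLength_add_single, add_right_inj] at hstart
  have hij : x i = x j := by
    by_contra hne
    simpa [hne] using congrFun hstart (x i)
  obtain rfl := eq_of_monotone_add_single hx hi hj hij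
  rfl

lemma consChain_surjective {x : Fin m → ℕ} (hx : Monotone x) :
    Function.Surjective (consChain (n := n) x) := by
  rintro ⟨c, hc⟩
  obtain ⟨r, hr⟩ := hc.step 0 n.succ_pos
  have hanti := hc.antitone 1 (Nat.le_add_left 1 n)
  have hle := hc.apply_zero_le (Nat.le_add_left 1 n)
  rw [hc.start, zero_add] at hr
  rw [hr] at hanti hle
  obtain ⟨i, rfl⟩ := exists_apply_eq_of_antitone_rowLength_add_single hanti hle
  obtain ⟨j, hj, hji⟩ := exists_monotone_add_single hx i
  rw [← hji, ← rowLength_add_single] at hr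
  refine ⟨⟨⟨j, hj⟩, fun k => c (k + 1), hr ▸ hc.tail⟩, Subtype.ext (funext fun k => ?_)⟩
  cases k with
  | zero => exact hc.start.symm
  | succ k => rfl

/-- Chains from the partition with column lengths `x`, by the column which the first step
extends. -/
def consChainEquiv {x : Fin m → ℕ} (hx : Monotone x) :
    (Σ j : {j : Fin m // Monotone (x + Pi.single j 1)},
      {c // EvenColumnChain m n (rowLength (x + Pi.single j.1 1)) c}) ≃
    {c // EvenColumnChain m (n + 1) (rowLength x) c} :=
  Equiv.ofBijective (consChain x) ⟨consChain_injective hx, consChain_surjective hx⟩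

lemma evenColumnChain_zero_rowLength_iff {x : Fin m → ℕ} {c : ℕ → ℕ → ℕ} :
    EvenColumnChain m 0 (rowLength x) c ↔ c = (fun _ => rowLength x) ∧ ∀ i, Even (x i) := by
  rw [evenColumnChain_zero_iff, forall_even_iff_rowLength_eq]
  simp only [rowLength_antitone, rowLength_le, true_and]

lemma finite_evenColumnChain (n : ℕ) {x : Fin m → ℕ} (hx : Monotone x) :
    Finite {c // EvenColumnChain m n (rowLength x) c} := by
  induction n generalizing x with
  | zero =>
    simp only [evenColumnChain_zero_rowLength_iff]
    exact ((Set.finite_singleton _).subset fun c hc => hc.1).to_subtype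
  | succ n ih =>
    have (j : {j : Fin m // Monotone (x + Pi.single j 1)}) := ih j.2
    exact Finite.of_equiv _ (consChainEquiv hx)

open Classical in
lemma card_evenColumnChain (n : ℕ) {x : Fin m → ℕ} (hx : Monotone x) :
    (Nat.card {c // EvenColumnChain m n (rowLength x) c} : ℝ) =
      (chamberStep ℝ m ^ n) (fun y => if ∀ i, Even (y i) then 1 else 0) x := by
  induction n generalizing x with
  | zero =>
    simp only [evenColumnChain_zero_rowLength_iff, pow_zero, Module.End.one_apply]
    split_ifs with h
    · simp [h]
    · simp [h]
  | succ n ih =>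
    have (j : {j : Fin m // Monotone (x + Pi.single j 1)}) := finite_evenColumnChain n j.2
    rw [← Nat.card_congr (consChainEquiv hx), Nat.card_sigma, Nat.cast_sum, pow_succ',
      Module.End.mul_apply, chamberStep_apply, ← sum_filter,
      sum_subtype (p := fun j : Fin m => Monotone (x + Pi.single j 1)) _ fun j => by simp]
    exact sum_congr rfl fun j _ => ih j.2

lemma fpfInvCount_eq_evenWalk (n m : ℕ) : (fpfInvCount n m : ℝ) = evenWalk m (2 * n) := by
  rw [fpfInvCount_eq_card_evenColumnChain, ← rowLength_zero (m := m)]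
  exact card_evenColumnChain (2 * n) monotone_const

end CountingChains

end

/-- For `l > 0`: `Σ_{n≥0} f^O_{n,2l} · t^{2n}/(2n)!
 = (1/2)·[ (1/2)·det_{0≤j,k<l}( I_{j−k}(2t) + I_{j+k}(2t) )
          + det_{0≤j,k<l−1}( I_{j−k}(2t) − I_{j+k+2}(2t) ) ]`. -/
theorem fO_gf_eq_bessel_dets (l : ℕ) (hl : 0 < l) (t : ℝ) :
    ∑' n : ℕ, (fpfInvCount n (2 * l) : ℝ) * t ^ (2 * n) / (Nat.factorial (2 * n) : ℝ) =
      (1 / 2) *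
        ((1 / 2) * Matrix.det (Matrix.of fun j k : Fin l =>
            besselI ((j : ℕ) - (k : ℕ) : ℤ) t + besselI ((j : ℕ) + (k : ℕ) : ℤ) t) +
          Matrix.det (Matrix.of fun j k : Fin (l - 1) =>
            besselI ((j : ℕ) - (k : ℕ) : ℤ) t -
              besselI ((j : ℕ) + (k : ℕ) + 2 : ℤ) t)) := by
  obtain ⟨k, rfl⟩ := Nat.exists_eq_add_of_le' hl
  simp_rw [fpfInvCount_eq_evenWalk]
  exact (hasSum_evenWalk k t).tsum_eq
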